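/- arXiv:1210.5546 — 3 statements merged into one kernel-verified Lean document; each statement's English description precedes it below -/
import Mathlib

section
/- Let p ∈ (0,1] and let ν_p^n be the probability measure on ℝ^n with density (c_p/2)^n · exp(−(|x_1|^p + … + |x_n|^p)), where c_p = 1/Γ(1+1/p). Then ν_p^n supports the S-inequality for all ideals in ℝ^n: for every ideal K ⊆ ℝ^n, every strip P = {x ∈ ℝ^n : |x_1| ≤ w} with ν_p^n(K) = ν_p^n(P), and every t ≥ 1, one has ν_p^n(tK) ≥ ν_p^n(tP). -/
/-!
Under `ν_p` the variable `|y| ^ p` has the Gamma law of shape `N = 1 / p ≥ 1`, with distribution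
function `F`, and under the image `ν'` of `ν_p` by the dilation of factor `t` it has distribution
function `a ↦ F (η a)`, where `η = t ^ (-p) ≤ 1`. Applied to `t K`, the S-inequality follows from
the claim that an ideal whose measure for the powers of `ν_p` is at most `F a` has measure at most
`F (η a)` for the powers of `ν'` (`ideal_le`).

The claim is proved by induction on the dimension. Slicing along one coordinate `y`, the measures
of the slices of an ideal form a function `k` which is nonincreasing in `|y|`, and the induction
hypothesis bounds the `ν'`-measures of the slices by `S (k y)`, where `S : F a ↦ F (η a)`. So one
has to show `S⁻¹ (∫ S(k) dν') ≤ ∫ k dν_p` (`functional`). The left-hand side `M k` is a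
quasi-arithmetic mean. By the criterion of Hardy, Littlewood and Pólya it is a convex function
of `k` when `S` is convex and `S' / S''` is concave, and here this is a consequence of the
log-concavity of the Gamma density of shape `N ≥ 1` (`IsGammaCDF.cross`). As `k` is a mixture of
indicators of symmetric intervals `L`, and `M 𝟙_L = S⁻¹ (ν' L) = ν_p L`, Jensen's inequality gives
`M k ≤ ∫ k dν_p`.

Convexity of `M` enters only through its supporting hyperplane at `k`, tested on indicators. This
reduces it to the tangent plane inequality for `(x, z) ↦ (S x - S z) / S' z` at points with
`x ∈ {0, 1}` (`IsGammaCDF.tangent`), and derivatives of `S` beyond the first are not needed.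
-/

open MeasureTheory Real Set Pointwise

noncomputable section

/-- A set `K ⊆ ℝⁿ` is an *ideal* if together with any point `x ∈ K` it contains the
box `[-|x 1|, |x 1|] × ⋯ × [-|x n|, |x n|]`. -/
def IsIdeal {n : ℕ} (K : Set (Fin n → ℝ)) : Prop :=
  ∀ x ∈ K, ∀ y : Fin n → ℝ, (∀ i, |y i| ≤ |x i|) → y ∈ K

/-- A measure `μ` on `ℝⁿ` *supports the S-inequality for all ideals* if for every ideal `K`,
every strip `P = {x : |x 0| ≤ w}` with `μ K = μ P`, and every `t ≥ 1`,
one has `μ (t • K) ≥ μ (t • P)`. -/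
def SupportsSIneq {n : ℕ} [NeZero n] (μ : Measure (Fin n → ℝ)) : Prop :=
  ∀ K : Set (Fin n → ℝ), MeasurableSet K → IsIdeal K →
    ∀ w : ℝ, 0 ≤ w → μ K = μ {x | |x 0| ≤ w} →
      ∀ t : ℝ, 1 ≤ t → μ (t • {x : Fin n → ℝ | |x 0| ≤ w}) ≤ μ (t • K)

/-! ### Gamma distribution functions and the tangent plane inequality -/

/-- `F` is the distribution function of a Gamma law of shape `N ≥ 1`: it vanishes on the negative
half-line and has density `C a ^ (N - 1) e⁻ᵃ` on the positive one (`C` is then the normalizing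
constant `1 / Γ(N)`). -/
structure IsGammaCDF (C N : ℝ) (F : ℝ → ℝ) : Prop where
  C_pos : 0 < C
  one_le : 1 ≤ N
  zero : ∀ a ≤ 0, F a = 0
  deriv : ∀ a, 0 < a → HasDerivAt F (C * a ^ (N - 1) * exp (-a)) a
  cont : Continuous F
  lim : Filter.Tendsto F Filter.atTop (nhds 1)

namespace IsGammaCDF

variable {C N : ℝ} {F : ℝ → ℝ}

lemma strictMonoOn (h : IsGammaCDF C N F) : StrictMonoOn F (Ici 0) := by
  apply strictMonoOn_of_deriv_pos (convex_Ici 0) h.cont.continuousOn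
  intro a ha
  rw [interior_Ici] at ha
  have ha : 0 < a := ha
  rw [(h.deriv a ha).deriv]
  have := h.C_pos
  positivity

lemma monotone (h : IsGammaCDF C N F) : Monotone F := by
  intro a b hab
  rcases le_total a 0 with ha | ha
  · rw [h.zero a ha]
    rcases le_total b 0 with hb | hb
    · rw [h.zero b hb]
    · rw [← h.zero 0 le_rfl]
      exact h.strictMonoOn.monotoneOn (mem_Ici.2 le_rfl) hb hb
  · exact h.strictMonoOn.monotoneOn ha (ha.trans hab) hab

lemma lt_one (h : IsGammaCDF C N F) (a : ℝ) : F a < 1 := by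
  have h1 : F a ≤ F (max a 0) := h.monotone (le_max_left _ _)
  have h2 : F (max a 0) < F (max a 0 + 1) :=
    h.strictMonoOn (le_max_right a 0) (by simp; positivity) (by simp)
  exact h1.trans_lt (h2.trans_le (h.monotone.ge_of_tendsto h.lim _))

lemma nonneg (h : IsGammaCDF C N F) (a : ℝ) : 0 ≤ F a := by
  have := h.monotone (min_le_left a 0)
  rwa [h.zero _ (min_le_right a 0)] at this

/-- Every value in `[0, F A]` is attained on `[0, A]`. -/
lemma exists_eq (h : IsGammaCDF C N F) {A u : ℝ} (hA : 0 ≤ A) (hu : u ∈ Icc 0 (F A)) :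
    ∃ a ∈ Icc 0 A, F a = u := by
  have := intermediate_value_Icc hA h.cont.continuousOn
  rw [h.zero 0 le_rfl] at this
  exact this hu

lemma hasDerivAt_scale (h : IsGammaCDF C N F) {η : ℝ} (hη : 0 < η) {a : ℝ} (ha : 0 < a) :
    HasDerivAt (fun a => F (η * a)) (η ^ N * C * a ^ (N - 1) * exp (-(η * a))) a := by
  have h1 := (h.deriv (η * a) (by positivity)).comp a ((hasDerivAt_id a).const_mul η)
  refine h1.congr_deriv ?_
  rw [mul_rpow hη.le ha.le, rpow_sub_one hη.ne']
  field_simp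

/-- The log-concavity of the density of `G a = F (η a)`, in integrated form: the ratio
`(G (b + δ) - G b) / G' b` is nonincreasing in `b`. -/
lemma cross (h : IsGammaCDF C N F) {η : ℝ} (hη : 0 < η) {b b' : ℝ} (hb : 0 < b) (hbb : b ≤ b')
    (δ : ℝ) :
    b ^ (N - 1) * exp (-(η * b)) * (F (η * (b' + δ)) - F (η * b')) ≤
      b' ^ (N - 1) * exp (-(η * b')) * (F (η * (b + δ)) - F (η * b)) := by
  have hb' : 0 < b' := hb.trans_le hbb
  set V : ℝ → ℝ := fun δ => b' ^ (N - 1) * exp (-(η * b')) * F (η * (b + δ)) -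
    b ^ (N - 1) * exp (-(η * b)) * F (η * (b' + δ)) with hV
  have hVc : Continuous V := by
    have := h.cont
    fun_prop
  have hVd : ∀ δ, -b < δ → HasDerivAt V (η ^ N * C * exp (-(η * b) - η * b' - η * δ) *
      ((b' * (b + δ)) ^ (N - 1) - (b * (b' + δ)) ^ (N - 1))) δ := by
    intro δ hδ
    have h1 := (h.hasDerivAt_scale hη (a := b + δ) (by linarith)).comp δ
      ((hasDerivAt_id δ).const_add b)
    have h2 := (h.hasDerivAt_scale hη (a := b' + δ) (by linarith)).comp δ
      ((hasDerivAt_id δ).const_add b')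
    refine ((h1.const_mul (b' ^ (N - 1) * exp (-(η * b')))).sub
      (h2.const_mul (b ^ (N - 1) * exp (-(η * b))))).congr_deriv ?_
    rw [mul_rpow hb'.le (by linarith), mul_rpow hb.le (by linarith),
      show -(η * b) - η * b' - η * δ = -(η * b') + -(η * (b + δ)) by ring, exp_add]
    have : exp (-(η * b)) * exp (-(η * (b' + δ))) = exp (-(η * b')) * exp (-(η * (b + δ))) := by
      rw [← exp_add, ← exp_add]; ring_nf
    linear_combination (-η ^ N * C * b ^ (N - 1) * (b' + δ) ^ (N - 1)) * this
  have hC := h.C_pos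
  have hN : 0 ≤ N - 1 := by linarith [h.one_le]
  have key : V 0 ≤ V δ := by
    rcases le_total 0 δ with hδ | hδ
    · have : MonotoneOn V (Ici 0) := by
        apply monotoneOn_of_deriv_nonneg (convex_Ici 0) hVc.continuousOn
        · intro x hx
          rw [interior_Ici] at hx
          have hx : 0 < x := hx
          exact (hVd x (by linarith)).differentiableAt.differentiableWithinAt
        · intro x hx
          rw [interior_Ici] at hx
          have hx : 0 < x := hx
          rw [(hVd x (by linarith)).deriv]
          have : (b * (b' + x)) ^ (N - 1) ≤ (b' * (b + x)) ^ (N - 1) :=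
            rpow_le_rpow (by positivity) (by nlinarith) hN
          have := sub_nonneg.2 this
          positivity
      exact this (mem_Ici.2 le_rfl) hδ hδ
    · have hanti : AntitoneOn V (Icc (-b) 0) := by
        apply antitoneOn_of_deriv_nonpos (convex_Icc _ _) hVc.continuousOn
        · intro x hx
          rw [interior_Icc] at hx
          exact (hVd x hx.1).differentiableAt.differentiableWithinAt
        · intro x hx
          rw [interior_Icc] at hx
          rw [(hVd x hx.1).deriv]
          have : (b' * (b + x)) ^ (N - 1) ≤ (b * (b' + x)) ^ (N - 1) :=
            rpow_le_rpow (mul_nonneg hb'.le (by linarith [hx.1])) (by nlinarith [hx.2]) hN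
          exact mul_nonpos_of_nonneg_of_nonpos (by positivity) (by linarith)
      rcases le_total (-b) δ with hδb | hδb
      · exact hanti ⟨hδb, hδ⟩ ⟨by linarith, le_rfl⟩ hδ
      · refine (hanti ⟨le_rfl, by linarith⟩ ⟨by linarith, le_rfl⟩ (by linarith)).trans ?_
        simp only [hV]
        rw [h.zero (η * (b + δ)) (mul_nonpos_of_nonneg_of_nonpos hη.le (by linarith)),
          h.zero (η * (b + -b)) (by simp)]
        have : F (η * (b' + δ)) ≤ F (η * (b' + -b)) := h.monotone (by gcongr)
        have : b ^ (N - 1) * exp (-(η * b)) * F (η * (b' + δ)) ≤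
          b ^ (N - 1) * exp (-(η * b)) * F (η * (b' + -b)) := by gcongr
        linarith
  simp only [hV, add_zero] at key
  linarith

/-- The derivative of `G / w - F`, where `G a = F (η a)` and `w = G' / F'`. -/
lemma hasDerivAt_Q (h : IsGammaCDF C N F) {η : ℝ} (hη : 0 < η) (a : ℝ) :
    HasDerivAt (fun a => F (η * a) / (η ^ N * exp ((1 - η) * a)) - F a)
      (-(1 - η) * (F (η * a) / (η ^ N * exp ((1 - η) * a)))) a := by
  have hηN : 0 < η ^ N := by positivity
  have hden : ∀ x : ℝ, η ^ N * exp ((1 - η) * x) ≠ 0 := fun x => by positivity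
  have hw : ∀ x : ℝ, HasDerivAt (fun a => η ^ N * exp ((1 - η) * a))
      ((1 - η) * (η ^ N * exp ((1 - η) * x))) x := by
    intro x
    refine ((((hasDerivAt_id x).const_mul (1 - η)).exp).const_mul (η ^ N)).congr_deriv ?_
    simp; ring
  have hcont : Continuous fun a => F (η * a) / (η ^ N * exp ((1 - η) * a)) :=
    (h.cont.comp (by fun_prop)).div (by fun_prop) hden
  refine hasDerivAt_of_hasDerivAt_of_ne' (x := 0)
    (g := fun a => -(1 - η) * (F (η * a) / (η ^ N * exp ((1 - η) * a)))) ?_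
    (hcont.sub h.cont).continuousAt (hcont.const_mul _).continuousAt a
  intro y hy
  rcases lt_or_gt_of_ne hy with hy | hy
  · have : (fun a => F (η * a) / (η ^ N * exp ((1 - η) * a)) - F a) =ᶠ[nhds y] fun _ => 0 := by
      filter_upwards [Iio_mem_nhds hy] with x hx
      have hx : x < 0 := hx
      rw [h.zero x hx.le, h.zero (η * x) (mul_nonpos_of_nonneg_of_nonpos hη.le hx.le)]
      simp
    rw [h.zero (η * y) (mul_nonpos_of_nonneg_of_nonpos hη.le hy.le)]
    rw [zero_div, mul_zero]
    exact (hasDerivAt_const y (0 : ℝ)).congr_of_eventuallyEq this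
  · refine (((h.hasDerivAt_scale hη hy).div (hw y) (hden y)).sub (h.deriv y hy)).congr_deriv ?_
    have : exp (-(η * y)) = exp ((1 - η) * y) * exp (-y) := by rw [← exp_add]; ring_nf
    rw [this]
    field_simp
    ring

/-- Tangent-line inequality at `F a` for the convex function `F ↦ G`, evaluated at `1`. -/
lemma conv_one (h : IsGammaCDF C N F) {η : ℝ} (hη : 0 < η) (hη1 : η ≤ 1) (a : ℝ) :
    η ^ N * exp ((1 - η) * a) * (1 - F a) ≤ 1 - F (η * a) := by
  set R : ℝ → ℝ := fun a => (1 - F (η * a)) / (η ^ N * exp ((1 - η) * a)) - (1 - F a) with hR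
  have hηN : 0 < η ^ N := by positivity
  have hden : ∀ x : ℝ, 0 < η ^ N * exp ((1 - η) * x) := fun x => by positivity
  have hRd : ∀ x, HasDerivAt R
      (-(1 - η) * ((1 - F (η * x)) / (η ^ N * exp ((1 - η) * x)))) x := by
    intro x
    have hw : HasDerivAt (fun a => (η ^ N * exp ((1 - η) * a))⁻¹)
      (-(1 - η) * (η ^ N * exp ((1 - η) * x))⁻¹) x := by
      have := (((((hasDerivAt_id x).const_mul (1 - η)).exp).const_mul (η ^ N)).inv (hden x).ne')
      refine this.congr_deriv ?_
      simp only [id]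
      field_simp
    have h2 := (hw.sub (h.hasDerivAt_Q hη x)).sub_const 1
    refine (h2.congr_deriv ?_).congr_of_eventuallyEq (Filter.Eventually.of_forall fun y => ?_)
    · ring
    · simp only [hR, Pi.sub_apply]; ring
  have hanti : Antitone R := by
    refine antitone_of_deriv_nonpos (fun x => (hRd x).differentiableAt) fun x => ?_
    rw [(hRd x).deriv]
    have := (h.lt_one (η * x)).le
    have : 0 ≤ (1 - F (η * x)) / (η ^ N * exp ((1 - η) * x)) :=
      div_nonneg (by linarith) (hden x).le
    nlinarith
  -- For `x ≥ a` one has `R x ≥ -(1 - F x)`, and the right-hand side tends to `0`.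
  have hR0 : 0 ≤ R a := by
    have hl : Filter.Tendsto (fun x => -(1 - F x)) Filter.atTop (nhds 0) := by
      simpa using (h.lim.const_sub 1).neg
    refine le_of_tendsto hl ?_
    filter_upwards [Filter.eventually_ge_atTop a] with x hx
    refine le_trans ?_ (hanti hx)
    have : 0 ≤ (1 - F (η * x)) / (η ^ N * exp ((1 - η) * x)) :=
      div_nonneg (by linarith [h.lt_one (η * x)]) (hden x).le
    simp only [hR]; linarith
  have : 1 - F a ≤ (1 - F (η * a)) / (η ^ N * exp ((1 - η) * a)) := by
    simp only [hR] at hR0; linarith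
  rw [le_div_iff₀ (hden a)] at this
  linarith

/-- Tangent-line inequality at `F a` for the convex function `F ↦ G`, evaluated at `0`. -/
lemma conv_zero (h : IsGammaCDF C N F) {η : ℝ} (hη : 0 < η) (hη1 : η ≤ 1) (a : ℝ) :
    F (η * a) ≤ η ^ N * exp ((1 - η) * a) * F a := by
  have hηN : 0 < η ^ N := by positivity
  have hden : ∀ x : ℝ, 0 < η ^ N * exp ((1 - η) * x) := fun x => by positivity
  rcases le_total a 0 with ha | ha
  · rw [h.zero a ha, h.zero (η * a) (mul_nonpos_of_nonneg_of_nonpos hη.le ha)]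
    simp
  have hanti : Antitone fun a => F (η * a) / (η ^ N * exp ((1 - η) * a)) - F a := by
    refine antitone_of_deriv_nonpos (fun x => (h.hasDerivAt_Q hη x).differentiableAt) fun x => ?_
    rw [(h.hasDerivAt_Q hη x).deriv]
    have : 0 ≤ F (η * x) / (η ^ N * exp ((1 - η) * x)) := div_nonneg (h.nonneg _) (hden x).le
    nlinarith
  have := hanti ha
  simp only [mul_zero, h.zero 0 le_rfl, zero_div, sub_zero] at this
  have : F (η * a) / (η ^ N * exp ((1 - η) * a)) ≤ F a := by linarith
  rw [div_le_iff₀ (hden a)] at this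
  linarith

/-- Joint convexity of the deviation function `(x, z) ↦ (S x - S z) / S' z` attached to the
convex function `S : F a ↦ F (η a)`, as the inequality between the function and its tangent plane
at `(F κ, F μ)`, at the points `(x, F b)` with `x ∈ {0, 1}`. Only the shape of the tangent plane
matters: `c` and `d` depend on `μ` and `b` alone. -/
lemma tangent (h : IsGammaCDF C N F) {η : ℝ} (hη : 0 < η) (hη1 : η ≤ 1) {μ b : ℝ} (hμ : 0 < μ)
    (hb : 0 ≤ b) : ∃ c d : ℝ, ∀ κ x : ℝ, x = 0 ∨ x = 1 →
      exp ((1 - η) * (κ - μ)) * (x - F κ) ≤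
        F b - F μ + c * (x - F (η * b)) + d * (F (η * κ) - F (η * μ)) := by
  set w : ℝ → ℝ := fun a => η ^ N * exp ((1 - η) * a) with hw
  set f : ℝ → ℝ := fun a => C * a ^ (N - 1) * exp (-a) with hf
  have hC := h.C_pos
  have hwpos : ∀ a, 0 < w a := fun a => by simp only [hw]; positivity
  have hfpos : ∀ a, 0 < a → 0 < f a := fun a ha => by simp only [hf]; positivity
  refine ⟨1 / w b, 1 / w μ * (-1 + (F b - F μ) * ((1 - η) / f μ)), fun κ x hx => ?_⟩
  set δ := κ - μ with hδ
  set ρ := exp ((1 - η) * δ) with hρ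
  have hρpos : 0 < ρ := exp_pos _
  have hwadd : ∀ a, w (a + δ) = ρ * w a := fun a => by
    simp only [hw, hρ, mul_add, exp_add]; ring
  set Q : ℝ → ℝ := fun a => F (η * a) / w a - F a with hQ
  have hQd : ∀ a, HasDerivAt Q (-(1 - η) * (F (η * a) / w a)) a := fun a => h.hasDerivAt_Q hη a
  set c₀ := (1 - η) * (F (η * (μ + δ)) - F (η * μ)) / (w μ * f μ) with hc₀
  set E : ℝ → ℝ := fun a => ρ * Q (a + δ) - Q a + c₀ * F a with hE
  have hEc : Continuous E := by
    have hQc : Continuous Q := continuous_iff_continuousAt.2 fun a => (hQd a).continuousAt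
    have := h.cont
    fun_prop
  have hEd : ∀ a, 0 < a → HasDerivAt E ((1 - η) / (w a * (w μ * f μ)) *
      ((w a * f a) * (F (η * (μ + δ)) - F (η * μ)) -
        (w μ * f μ) * (F (η * (a + δ)) - F (η * a)))) a := by
    intro a ha
    have h1 := ((hQd (a + δ)).comp a ((hasDerivAt_id a).add_const δ)).const_mul ρ
    refine ((h1.sub (hQd a)).add ((h.deriv a ha).const_mul c₀)).congr_deriv ?_
    have e1 : C * a ^ (N - 1) * exp (-a) = f a := rfl
    have := (hwpos a).ne'
    have := (hwpos μ).ne'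
    have := (hfpos μ hμ).ne'
    rw [e1, hwadd, hc₀]
    field_simp
    ring
  have hwf : ∀ a, w a * f a = η ^ N * C * (a ^ (N - 1) * exp (-(η * a))) := by
    intro a
    have : exp (-(η * a)) = exp ((1 - η) * a) * exp (-a) := by rw [← exp_add]; ring_nf
    simp only [hw, hf, this]; ring
  have hcross : ∀ a a', 0 < a → a ≤ a' → (w a * f a) * (F (η * (a' + δ)) - F (η * a')) ≤
      (w a' * f a') * (F (η * (a + δ)) - F (η * a)) := by
    intro a a' ha haa
    have := h.cross hη ha haa δ
    have h2 : 0 < η ^ N * C := by positivity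
    have := mul_le_mul_of_nonneg_left this h2.le
    rw [hwf, hwf]
    linarith
  have hcoef : ∀ a, 0 ≤ (1 - η) / (w a * (w μ * f μ)) := fun a =>
    div_nonneg (by linarith) (mul_pos (hwpos a) (mul_pos (hwpos μ) (hfpos μ hμ))).le
  have key : E μ ≤ E b := by
    rcases le_total b μ with hbμ | hbμ
    · have : AntitoneOn E (Icc 0 μ) := by
        apply antitoneOn_of_deriv_nonpos (convex_Icc _ _) hEc.continuousOn
        · intro a ha
          rw [interior_Icc] at ha
          exact (hEd a ha.1).differentiableAt.differentiableWithinAt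
        · intro a ha
          rw [interior_Icc] at ha
          rw [(hEd a ha.1).deriv]
          exact mul_nonpos_of_nonneg_of_nonpos (hcoef a)
            (by linarith [hcross a μ ha.1 ha.2.le])
      exact this ⟨hb, hbμ⟩ ⟨hμ.le, le_rfl⟩ hbμ
    · have : MonotoneOn E (Ici μ) := by
        apply monotoneOn_of_deriv_nonneg (convex_Ici _) hEc.continuousOn
        · intro a ha
          rw [interior_Ici] at ha
          exact (hEd a (hμ.trans ha)).differentiableAt.differentiableWithinAt
        · intro a ha
          rw [interior_Ici] at ha
          have ha : μ < a := ha
          rw [(hEd a (hμ.trans ha)).deriv]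
          exact mul_nonneg (hcoef a) (by linarith [hcross μ a hμ ha.le])
      exact this (mem_Ici.2 le_rfl) hbμ hbμ
  -- The minimum over `x` of the difference is at `x = F (b + δ)`; compare with that point.
  have hconv : ρ * (x - F (b + δ)) ≤ (x - F (η * (b + δ))) / w b := by
    rw [le_div_iff₀ (hwpos b)]
    have hw' : w (b + δ) = η ^ N * exp ((1 - η) * (b + δ)) := rfl
    rcases hx with rfl | rfl
    · have := h.conv_zero hη hη1 (b + δ)
      rw [← hw', hwadd] at this
      linarith
    · have := h.conv_one hη hη1 (b + δ)
      rw [← hw', hwadd] at this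
      linarith
  have hμδ : μ + δ = κ := by simp [hδ]
  have hEb : ∀ a, E a = (F (η * (a + δ)) - F (η * a)) / w a - ρ * F (a + δ) + F a + c₀ * F a := by
    intro a
    have := (hwpos a).ne'
    simp only [hE, hQ, hwadd]
    field_simp
    ring
  rw [hEb, hEb, hc₀, hμδ] at key
  have e2 : (x - F (η * (b + δ))) / w b = 1 / w b * (x - F (η * b)) -
      (F (η * (b + δ)) - F (η * b)) / w b := by ring
  have e3 : (1 - η) * (F (η * κ) - F (η * μ)) / (w μ * f μ) =
      1 / w μ * ((1 - η) / f μ) * (F (η * κ) - F (η * μ)) := by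
    rw [div_mul_div_comm, one_mul]; ring
  rw [e2] at hconv
  rw [e3] at key
  have e4 : (F (η * κ) - F (η * μ)) / w μ = 1 / w μ * (F (η * κ) - F (η * μ)) := by ring
  rw [e4] at key
  linarith

end IsGammaCDF

/-! ### Convexity of the quasi-arithmetic mean -/

/-- `ν` is an atomless law on `ℝ` under which `|y| ^ p` has distribution function `F`. -/
structure HasRadialCDF (p : ℝ) (F : ℝ → ℝ) (ν : Measure ℝ) : Prop where
  prob : IsProbabilityMeasure ν
  noAtoms : NullSingletonClass ν
  Icc_eq : ∀ r, 0 ≤ r → ν (Icc (-r) r) = ENNReal.ofReal (F (r ^ p))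

/-- A bounded symmetric interval has the form `{|y| ^ p ≤ b}` up to endpoints. -/
lemma exists_radius {p η : ℝ} {F : ℝ → ℝ} {ν ν' : Measure ℝ}
    (hF0 : F 0 = 0) (hν : HasRadialCDF p F ν)
    (hν' : HasRadialCDF p (fun a => F (η * a)) ν') {L : Set ℝ}
    (hL : ∀ y ∈ L, ∀ z, |z| ≤ |y| → z ∈ L) {R : ℝ} (hR : ∀ y ∈ L, |y| ≤ R) :
    ∃ b, 0 ≤ b ∧ ν L = ENNReal.ofReal (F b) ∧ ν' L = ENNReal.ofReal (F (η * b)) := by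
  have := hν.noAtoms
  have := hν'.noAtoms
  rcases L.eq_empty_or_nonempty with rfl | hne
  · exact ⟨0, le_rfl, by simp [hF0], by simp [hF0]⟩
  set β := sSup ((fun y => |y|) '' L) with hβ
  have hbdd : BddAbove ((fun y : ℝ => |y|) '' L) := ⟨R, by rintro _ ⟨y, hy, rfl⟩; exact hR y hy⟩
  have hβ0 : 0 ≤ β := by
    obtain ⟨y, hy⟩ := hne
    exact (abs_nonneg y).trans (le_csSup hbdd ⟨y, hy, rfl⟩)
  have h1 : L ⊆ Icc (-β) β := fun y hy => abs_le.1 (le_csSup hbdd ⟨y, hy, rfl⟩)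
  have h2 : Ioo (-β) β ⊆ L := by
    intro z hz
    obtain ⟨_, ⟨y, hy, rfl⟩, hzy⟩ := exists_lt_of_lt_csSup (hne.image _) (abs_lt.2 hz)
    exact hL y hy z hzy.le
  have h3 : ∀ m : Measure ℝ, NullSingletonClass m → m L = m (Icc (-β) β) := fun m hm =>
    le_antisymm (measure_mono h1)
      ((measure_congr (Ioo_ae_eq_Icc (μ := m))).symm.le.trans (measure_mono h2))
  exact ⟨β ^ p, by positivity, by rw [h3 ν inferInstance, hν.Icc_eq _ hβ0],
    by rw [h3 ν' inferInstance, hν'.Icc_eq _ hβ0]⟩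

/-- Layer-cake comparison: if the `ν`-measures of the superlevel sets of `k` dominate their
`ν''`-measures up to a constant `c`, so do the integrals of `k`. -/
lemma layer {ν ν'' : Measure ℝ} [IsProbabilityMeasure ν] [IsFiniteMeasure ν''] {k : ℝ → ℝ}
    (hkm : Measurable k) (hk0 : ∀ y, 0 ≤ k y) (hk1 : ∀ y, k y ≤ 1) {c : ℝ}
    (h : ∀ r, 0 ≤ r → c + ν''.real {y | r < k y} ≤ ν.real {y | r < k y}) :
    c + ∫ y, k y ∂ν'' ≤ ∫ y, k y ∂ν := by
  have hint : ∀ m : Measure ℝ, IsFiniteMeasure m → Integrable k m := fun m _ =>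
    Integrable.of_bound hkm.aestronglyMeasurable 1 (Filter.Eventually.of_forall fun y => by
      rw [norm_eq_abs, abs_of_nonneg (hk0 y)]; exact hk1 y)
  have hlay : ∀ m : Measure ℝ, IsFiniteMeasure m →
      ∫ y, k y ∂m = ∫ r in Icc (0 : ℝ) 1, m.real {y | r < k y} := by
    intro m hm
    rw [(hint m hm).integral_eq_integral_meas_lt (Filter.Eventually.of_forall hk0),
      integral_Icc_eq_integral_Ioc]
    refine setIntegral_eq_of_subset_of_forall_sdiff_eq_zero measurableSet_Ioi
      (fun r hr => hr.1) fun r hr => ?_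
    have : {y | r < k y} = ∅ := by
      ext y
      have h1 : 0 < r := hr.1
      have h2 : 1 < r := by
        by_contra! h'
        exact hr.2 ⟨h1, h'⟩
      simpa using (hk1 y).trans h2.le
    simp [this]
  have hri : ∀ m : Measure ℝ, IsFiniteMeasure m →
      IntegrableOn (fun r => m.real {y | r < k y}) (Icc (0 : ℝ) 1) := by
    intro m hm
    refine AntitoneOn.integrableOn_isCompact isCompact_Icc fun r _ r' _ hrr => ?_
    exact measureReal_mono fun y (hy : r' < k y) => lt_of_le_of_lt hrr hy
  rw [hlay ν inferInstance, hlay ν'' inferInstance]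
  have hc : ∫ r in Icc (0 : ℝ) 1, c = c := by simp
  rw [← hc, ← integral_add (by simp) (hri ν'' inferInstance)]
  refine setIntegral_mono_on ((integrableOn_const (by simp)).add (hri ν'' inferInstance))
    (hri ν inferInstance) measurableSet_Icc fun r hr => ?_
  exact h r hr.1

/-- The two-dimensional case, in functional form. With `S` the convex function `F a ↦ F (η a)`,
the quasi-arithmetic mean `M k = S⁻¹ (∫ S(k) dν')` satisfies `M k ≤ ∫ k dν` for `k`
nonincreasing in `|y|`: it is convex, `k` is a mixture of indicators of symmetric intervals `L`,
and `M 𝟙_L = ν L`. -/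
lemma functional {p C N η : ℝ} {F : ℝ → ℝ} {ν ν' : Measure ℝ} (h : IsGammaCDF C N F)
    (hη : 0 < η) (hη1 : η ≤ 1) (hν : HasRadialCDF p F ν)
    (hν' : HasRadialCDF p (fun a => F (η * a)) ν') {k k' : ℝ → ℝ} {R A : ℝ}
    (hA : 0 ≤ A) (hkm : Measurable k) (hk : ∀ y z, |z| ≤ |y| → k y ≤ k z)
    (hk0 : ∀ y, 0 ≤ k y) (hkA : ∀ y, k y ≤ F A) (hkR : ∀ y, R < |y| → k y = 0)
    (hk'm : Measurable k') (hk'0 : ∀ y, 0 ≤ k' y)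
    (hk' : ∀ y a, 0 ≤ a → k y ≤ F a → k' y ≤ F (η * a)) {a : ℝ} (ha : 0 ≤ a)
    (hka : ∫ y, k y ∂ν ≤ F a) : ∫ y, k' y ∂ν' ≤ F (η * a) := by
  have := hν'.prob
  have := hν.prob
  -- A monotone right inverse of `F` on `[0, F A]`, extended to be constant outside.
  have hinv : ∀ u : ℝ, ∃ a ∈ Icc 0 A, F a = max 0 (min u (F A)) := fun u =>
    h.exists_eq hA ⟨le_max_left _ _, max_le (h.nonneg A) (min_le_right _ _)⟩
  choose ι hιm hι using hinv
  have hιmono : Monotone ι := by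
    intro u v huv
    by_contra! hlt
    have := h.strictMonoOn (hιm v).1 (hιm u).1 hlt
    rw [hι, hι] at this
    exact absurd this (not_lt.2 (by gcongr))
  set κ : ℝ → ℝ := fun y => ι (k y) with hκ
  have hκm : Measurable κ := hιmono.measurable.comp hkm
  have hκA : ∀ y, κ y ∈ Icc 0 A := fun y => hιm _
  have hFκ : ∀ y, F (κ y) = k y := fun y => by
    rw [hκ, hι, min_eq_left (hkA y), max_eq_right (hk0 y)]
  have hGκm : Measurable fun y => F (η * κ y) :=
    h.cont.measurable.comp (hκm.const_mul η)
  have hGκi : Integrable (fun y => F (η * κ y)) ν' :=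
    Integrable.of_bound hGκm.aestronglyMeasurable 1 (Filter.Eventually.of_forall fun y => by
      rw [norm_eq_abs, abs_of_nonneg (h.nonneg _)]; exact (h.lt_one _).le)
  have hk'κ : ∀ y, k' y ≤ F (η * κ y) := fun y => hk' y _ (hκA y).1 (hFκ y).ge
  have hk'i : Integrable k' ν' := hGκi.mono' hk'm.aestronglyMeasurable
    (Filter.Eventually.of_forall fun y => by
      rw [norm_eq_abs, abs_of_nonneg (hk'0 y)]; exact hk'κ y)
  refine (integral_mono hk'i hGκi hk'κ).trans ?_
  set I := ∫ y, F (η * κ y) ∂ν' with hI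
  have hI0 : 0 ≤ I := integral_nonneg fun y => h.nonneg _
  have hIA : I ≤ F (η * A) := by
    have : I ≤ ∫ _, F (η * A) ∂ν' := integral_mono hGκi (integrable_const _) fun y =>
      h.monotone (by gcongr; exact (hκA y).2)
    simpa using this
  obtain ⟨m', hm', hm'I⟩ := h.exists_eq (A := η * A) (by positivity) ⟨hI0, hIA⟩
  obtain ⟨μ, rfl⟩ : ∃ μ, m' = η * μ := ⟨m' / η, by field_simp⟩
  have hμ0 : 0 ≤ μ := nonneg_of_mul_nonneg_right hm'.1 hη
  rw [← hm'I]
  suffices hmain : F μ ≤ ∫ y, k y ∂ν by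
    have : μ ≤ a := (h.strictMonoOn.le_iff_le hμ0 ha).1 (hmain.trans hka)
    exact h.monotone (by gcongr)
  rcases hμ0.eq_or_lt with rfl | hμ
  · rw [h.zero 0 le_rfl]
    exact integral_nonneg hk0
  -- The weight `S' (k y) / S' (F μ)`, the slope of the tangent plane in the `x`-direction.
  set W : ℝ → ℝ := fun y => exp ((1 - η) * (κ y - μ)) with hW
  have hWm : Measurable W := by fun_prop
  have hWpos : ∀ y, 0 < W y := fun y => exp_pos _
  have hWi : Integrable W ν' :=
    Integrable.of_bound hWm.aestronglyMeasurable (exp ((1 - η) * (A - μ)))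
      (Filter.Eventually.of_forall fun y => by
        rw [norm_eq_abs, abs_of_pos (hWpos y)]
        refine exp_le_exp.2 (mul_le_mul_of_nonneg_left ?_ (by linarith))
        linarith [(hκA y).2])
  have hkb : ∀ y, ‖k y‖ ≤ 1 := fun y => by
    rw [norm_eq_abs, abs_of_nonneg (hk0 y)]; exact (hkA y).trans (h.lt_one A).le
  have hWki : Integrable (fun y => W y * k y) ν' :=
    hWi.mul_bdd hkm.aestronglyMeasurable (Filter.Eventually.of_forall hkb)
  set ν'' : Measure ℝ := ν'.withDensity fun y => ENNReal.ofReal (W y) with hν''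
  have : IsFiniteMeasure ν'' := isFiniteMeasure_withDensity_ofReal hWi.2
  have hL : ∀ L, MeasurableSet L → ν''.real L = ∫ y in L, W y ∂ν' := by
    intro L hLm
    rw [Measure.real, hν'', withDensity_apply _ hLm,
      ← ofReal_integral_eq_lintegral_ofReal hWi.integrableOn
        (Filter.Eventually.of_forall fun y => (hWpos y).le),
      ENNReal.toReal_ofReal (integral_nonneg fun y => (hWpos y).le)]
  have hkν'' : ∫ y, k y ∂ν'' = ∫ y, W y * k y ∂ν' := by
    rw [hν'', integral_withDensity_eq_integral_toReal_smul (by fun_prop) (by simp)]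
    refine integral_congr_ae (Filter.Eventually.of_forall fun y => ?_)
    simp [ENNReal.toReal_ofReal (hWpos y).le]
  have hlev : ∀ r, 0 ≤ r → (F μ - ∫ y, W y * k y ∂ν') + ν''.real {y | r < k y} ≤
      ν.real {y | r < k y} := by
    intro r hr
    set L := {y | r < k y} with hLdef
    have hLm : MeasurableSet L := measurableSet_lt measurable_const hkm
    obtain ⟨b, hb0, hνL, hν'L⟩ := exists_radius (h.zero 0 le_rfl) hν hν' (L := L) (R := R)
      (fun y hy z hzy => lt_of_lt_of_le (show r < k y from hy) (hk y z hzy)) (by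
        intro y hy
        by_contra! hlt
        have : r < k y := hy
        rw [hkR y hlt] at this
        linarith)
    obtain ⟨c, d, hcd⟩ := h.tangent hη hη1 hμ hb0
    have hpt : ∀ y, W y * L.indicator 1 y - W y * k y ≤
        F b - F μ + c * (L.indicator 1 y - F (η * b)) + d * (F (η * κ y) - F (η * μ)) := by
      intro y
      have := hcd (κ y) (L.indicator 1 y) (by
        by_cases hy : y ∈ L <;> simp [hy])
      rw [hFκ] at this
      calc _ = W y * (L.indicator 1 y - k y) := by ring
        _ ≤ _ := this
    have hWL : (fun y => W y * L.indicator 1 y) = L.indicator W := by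
      ext y
      by_cases hy : y ∈ L <;> simp [hy]
    have hindi : Integrable (L.indicator (1 : ℝ → ℝ)) ν' :=
      (integrable_const (1 : ℝ)).indicator hLm
    have hWLi : Integrable (fun y => W y * L.indicator 1 y) ν' := by
      rw [hWL]; exact hWi.indicator hLm
    have h1 : Integrable (fun y => c * (L.indicator 1 y - F (η * b))) ν' :=
      (hindi.sub (integrable_const _)).const_mul c
    have h2 : Integrable (fun y => d * (F (η * κ y) - F (η * μ))) ν' :=
      (hGκi.sub (integrable_const _)).const_mul d
    have h12 : Integrable (fun y => F b - F μ + c * (L.indicator 1 y - F (η * b))) ν' :=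
      (integrable_const (F b - F μ)).add h1
    have hint := integral_mono (hWLi.sub hWki)
      (h12.add h2) hpt
    have e1 : ∫ y, (L.indicator (1 : ℝ → ℝ) y) ∂ν' = F (η * b) := by
      rw [integral_indicator_one hLm, Measure.real, hν'L, ENNReal.toReal_ofReal (h.nonneg _)]
    simp only [Pi.add_apply, Pi.sub_apply] at hint
    rw [integral_sub hWLi hWki, hWL, integral_indicator hLm, ← hL L hLm,
      integral_add h12 h2,
      integral_add (integrable_const _) h1, integral_const_mul, integral_const_mul,
      integral_sub hindi (integrable_const _), integral_sub hGκi (integrable_const _), e1,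
      ← hI, ← hm'I] at hint
    simp only [integral_const, probReal_univ, smul_eq_mul, one_mul, sub_self, mul_zero,
      add_zero] at hint
    have e2 : ν.real L = F b := by
      rw [Measure.real, hνL, ENNReal.toReal_ofReal (h.nonneg _)]
    rw [e2]
    linarith
  have hfin := layer hkm hk0 (fun y => (hkA y).trans (h.lt_one A).le) hlev
  rw [hkν''] at hfin
  linarith

/-! ### Ideals in product spaces -/

/-- Fubini for the first coordinate. -/
lemma pi_slice (m : Measure ℝ) [IsProbabilityMeasure m] (n : ℕ) {K : Set (Fin (n + 1) → ℝ)}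
    (hK : MeasurableSet K) :
    Measurable (fun y : ℝ => Measure.pi (fun _ : Fin n => m) {x | Fin.cons y x ∈ K}) ∧
    Measure.pi (fun _ : Fin (n + 1) => m) K =
      ∫⁻ y, Measure.pi (fun _ : Fin n => m) {x | Fin.cons y x ∈ K} ∂m := by
  set e := MeasurableEquiv.piFinSuccAbove (fun _ : Fin (n + 1) => ℝ) 0 with he
  have hmp : MeasurePreserving e _ _ :=
    measurePreserving_piFinSuccAbove (fun _ : Fin (n + 1) => m) 0
  have hmeas : MeasurableSet (e.symm ⁻¹' K) := e.symm.measurable hK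
  have hsl : ∀ y : ℝ, Prod.mk y ⁻¹' (e.symm ⁻¹' K) = {x | Fin.cons y x ∈ K} := by
    intro y
    ext x
    simp [he, MeasurableEquiv.piFinSuccAbove]
    rfl
  constructor
  · have := measurable_measure_prodMk_left (ν := Measure.pi fun _ : Fin n => m) hmeas
    simpa only [hsl] using this
  · rw [← hmp.symm.measure_preimage hK.nullMeasurableSet, Measure.prod_apply hmeas]
    simp only [hsl]

/-- Comparison of ideals with strips for the product laws of `ν` and of its dilation `ν'`, for
bounded ideals: if `K` has at most the `ν`-measure of the strip `|x 0| ^ p ≤ a`, it has at most the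
`ν'`-measure of that strip. Induction on the dimension, slicing along the first coordinate. -/
lemma bounded_ideal {p C N η : ℝ} {F : ℝ → ℝ} {ν ν' : Measure ℝ}
    (h : IsGammaCDF C N F)
    (hη : 0 < η) (hη1 : η ≤ 1) (hν : HasRadialCDF p F ν)
    (hν' : HasRadialCDF p (fun a => F (η * a)) ν') (n : ℕ) :
    ∀ K : Set (Fin (n + 1) → ℝ), MeasurableSet K → IsIdeal K → ∀ R : ℝ, 0 ≤ R →
      (∀ x ∈ K, ∀ i, |x i| ≤ R) → ∀ a, 0 ≤ a →
      Measure.pi (fun _ => ν) K ≤ ENNReal.ofReal (F a) →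
      Measure.pi (fun _ => ν') K ≤ ENNReal.ofReal (F (η * a)) := by
  have := hν.prob
  have := hν'.prob
  induction n with
  | zero =>
    intro K hKm hKi R hR hKR a ha hKa
    set L : Set ℝ := {y | (fun _ => y) ∈ K} with hL
    have hpi : ∀ m : Measure ℝ, IsProbabilityMeasure m → Measure.pi (fun _ : Fin 1 => m) K = m L := by
      intro m hm
      have := (measurePreserving_funUnique m (Fin 1)).symm
      exact (this.measure_preimage hKm.nullMeasurableSet).symm
    obtain ⟨b, hb0, hb, hb'⟩ := exists_radius (h.zero 0 le_rfl) hν hν' (L := L) (R := R)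
      (fun y hy z hzy => hKi _ hy _ fun _ => hzy) (fun y hy => hKR _ hy 0)
    rw [hpi ν inferInstance, hb, ENNReal.ofReal_le_ofReal_iff (h.nonneg _),
      h.strictMonoOn.le_iff_le hb0 ha] at hKa
    rw [hpi ν' inferInstance, hb']
    exact ENNReal.ofReal_le_ofReal (h.monotone (by gcongr))
  | succ n ih =>
    intro K hKm hKi R hR hKR a ha hKa
    set Ky : ℝ → Set (Fin (n + 1) → ℝ) := fun y => {x | Fin.cons y x ∈ K} with hKy
    have hcons : ∀ y : ℝ, Measurable fun x : Fin (n + 1) → ℝ =>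
        (Fin.cons y x : Fin (n + 2) → ℝ) := fun y =>
      measurable_pi_iff.2 fun i => by
        refine Fin.cases ?_ (fun j => ?_) i
        · simp
        · simpa using measurable_pi_apply j
    have hKym : ∀ y, MeasurableSet (Ky y) := fun y => hcons y hKm
    have hKyi : ∀ y, IsIdeal (Ky y) := fun y x hx z hz => hKi _ hx _ fun i => by
      refine Fin.cases ?_ (fun j => ?_) i
      · simp
      · simpa using hz j
    have hKyR : ∀ y, ∀ x ∈ Ky y, ∀ i, |x i| ≤ R := fun y x hx i => by
      simpa using hKR _ hx i.succ
    obtain ⟨hm, hs⟩ := pi_slice ν (n + 1) hKm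
    obtain ⟨hm', hs'⟩ := pi_slice ν' (n + 1) hKm
    set P := Measure.pi (fun _ : Fin (n + 1) => ν) with hP
    set P' := Measure.pi (fun _ : Fin (n + 1) => ν') with hP'
    have hi : ∫⁻ y, P (Ky y) ∂ν = ENNReal.ofReal (∫ y, P.real (Ky y) ∂ν) := by
      have hne := measure_ne_top (Measure.pi fun _ : Fin (n + 2) => ν) K
      rw [hs] at hne
      have e := integral_toReal hm.aemeasurable
        (Filter.Eventually.of_forall fun y => measure_lt_top P _) (μ := ν)
      change ∫ y, P.real (Ky y) ∂ν = (∫⁻ y, P (Ky y) ∂ν).toReal at e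
      rw [e, ENNReal.ofReal_toReal hne]
    have hi' : ∫⁻ y, P' (Ky y) ∂ν' = ENNReal.ofReal (∫ y, P'.real (Ky y) ∂ν') := by
      have hne := measure_ne_top (Measure.pi fun _ : Fin (n + 2) => ν') K
      rw [hs'] at hne
      have e := integral_toReal hm'.aemeasurable
        (Filter.Eventually.of_forall fun y => measure_lt_top P' _) (μ := ν')
      change ∫ y, P'.real (Ky y) ∂ν' = (∫⁻ y, P' (Ky y) ∂ν').toReal at e
      rw [e, ENNReal.ofReal_toReal hne]
    rw [hs, hi, ENNReal.ofReal_le_ofReal_iff (h.nonneg _)] at hKa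
    rw [hs', hi']
    refine ENNReal.ofReal_le_ofReal ?_
    refine functional (R := R) (A := R ^ p) h hη hη1 hν hν' (by positivity) hm.ennreal_toReal ?_
      (fun _ => measureReal_nonneg) ?_ ?_ hm'.ennreal_toReal (fun _ => measureReal_nonneg) ?_ ha hKa
    · intro y z hzy
      refine measureReal_mono (fun x hx => hKi _ hx _ fun i => ?_)
      refine Fin.cases ?_ (fun j => ?_) i
      · simpa using hzy
      · simp
    · intro y
      refine ENNReal.toReal_le_of_le_ofReal (h.nonneg _) ?_
      have hsub : Ky y ⊆ Set.pi univ fun _ => Icc (-R) R := fun x hx i _ =>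
        abs_le.1 (hKyR y x hx i)
      refine (measure_mono hsub).trans ?_
      rw [hP, Measure.pi_pi]
      simp only [hν.Icc_eq R hR, Finset.prod_const, Finset.card_univ, Fintype.card_fin]
      refine pow_le_of_le_one zero_le ?_ (by omega)
      exact ENNReal.ofReal_le_one.2 (h.lt_one _).le
    · intro y hy
      have : Ky y = ∅ := by
        ext x
        simp only [mem_empty_iff_false, iff_false]
        intro hx
        have := hKR _ hx 0
        simp only [Fin.cons_zero] at this
        linarith
      change P.real (Ky y) = 0
      simp [this]
    · intro y a ha hya
      refine ENNReal.toReal_le_of_le_ofReal (h.nonneg _)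
        (ih (Ky y) (hKym y) (hKyi y) R hR (hKyR y) a ha ?_)
      exact (ENNReal.le_ofReal_iff_toReal_le (measure_ne_top _ _) (h.nonneg _)).2 hya

/-- The boundedness assumption of `bounded_ideal` is removed by exhaustion. -/
lemma ideal_le {p C N η : ℝ} {F : ℝ → ℝ} {ν ν' : Measure ℝ}
    (h : IsGammaCDF C N F)
    (hη : 0 < η) (hη1 : η ≤ 1) (hν : HasRadialCDF p F ν)
    (hν' : HasRadialCDF p (fun a => F (η * a)) ν') (n : ℕ) [NeZero n]
    {K : Set (Fin n → ℝ)} (hKm : MeasurableSet K) (hKi : IsIdeal K) {a : ℝ} (ha : 0 ≤ a)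
    (hKa : Measure.pi (fun _ => ν) K ≤ ENNReal.ofReal (F a)) :
    Measure.pi (fun _ => ν') K ≤ ENNReal.ofReal (F (η * a)) := by
  obtain ⟨n, rfl⟩ := Nat.exists_eq_succ_of_ne_zero (NeZero.ne n)
  have := hν.prob
  have := hν'.prob
  set B : ℕ → Set (Fin (n + 1) → ℝ) := fun R => K ∩ {x | ∀ i, |x i| ≤ R} with hB
  have hBm : ∀ R, MeasurableSet (B R) := fun R => by
    refine hKm.inter ?_
    rw [ofPred_forall]
    exact MeasurableSet.iInter fun i =>
      measurableSet_le (measurable_pi_apply i).abs measurable_const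
  have hBmono : Monotone B := fun R R' hRR x hx =>
    ⟨hx.1, fun i => (hx.2 i).trans (by exact_mod_cast hRR)⟩
  have hBU : ⋃ R, B R = K := by
    refine subset_antisymm (iUnion_subset fun R => inter_subset_left) fun x hx => ?_
    obtain ⟨R, hR⟩ := exists_nat_ge ‖x‖
    exact mem_iUnion.2 ⟨R, hx, fun i => (norm_le_pi_norm x i).trans hR⟩
  rw [← hBU, hBmono.measure_iUnion]
  refine iSup_le fun R => bounded_ideal h hη hη1 hν hν' n (B R) (hBm R) ?_ R (by positivity)
    (fun x hx => hx.2) a ha ((measure_mono inter_subset_left).trans hKa)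
  exact fun x hx y hy => ⟨hKi x hx.1 y hy, fun i => (hy i).trans (hx.2 i)⟩

/-! ### The measure `ν_p` -/

/-- The density of `ν_p` on the line. -/
def nuDensity (p y : ℝ) : ℝ := (1 / Real.Gamma (1 + 1 / p)) / 2 * exp (-|y| ^ p)

/-- The measure `ν_p` on the line. -/
def nu (p : ℝ) : Measure ℝ := volume.withDensity fun y => ENNReal.ofReal (nuDensity p y)

/-- The distribution function of `|y| ^ p` under `ν_p`. The truncation `max a 0` makes it vanish
for `a ≤ 0`, where the real power is not meaningful. -/
def nuCDF (p a : ℝ) : ℝ := ∫ y in (0 : ℝ)..(max a 0) ^ (1 / p), 2 * nuDensity p y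

lemma nuDensity_pos {p : ℝ} (hp : 0 < p) (y : ℝ) : 0 < nuDensity p y := by
  have : 0 < Real.Gamma (1 + 1 / p) := Real.Gamma_pos_of_pos (by positivity)
  unfold nuDensity
  positivity

lemma continuous_nuDensity {p : ℝ} (hp : 0 < p) : Continuous (nuDensity p) := by
  unfold nuDensity
  have : Continuous fun y : ℝ => |y| ^ p := continuous_abs.rpow_const fun _ => Or.inr hp.le
  fun_prop

lemma integral_Ioi_nuDensity {p : ℝ} (hp : 0 < p) : ∫ y in Ioi (0 : ℝ), 2 * nuDensity p y = 1 := by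
  have hG : 0 < Real.Gamma (1 + 1 / p) := Real.Gamma_pos_of_pos (by positivity)
  have : ∫ y in Ioi (0 : ℝ), 2 * nuDensity p y =
      ∫ y in Ioi (0 : ℝ), 1 / Real.Gamma (1 + 1 / p) * exp (-y ^ p) := by
    refine setIntegral_congr_fun measurableSet_Ioi fun y hy => ?_
    have hy : 0 < y := hy
    simp only [nuDensity, abs_of_pos hy]
    ring
  rw [this, integral_const_mul, integral_exp_neg_rpow hp, add_comm (1 / p) 1]
  field_simp

lemma integral_nuDensity {p : ℝ} (hp : 0 < p) : ∫ y, nuDensity p y = 1 := by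
  have h1 : ∀ y, nuDensity p y = nuDensity p |y| := fun y => by simp [nuDensity]
  rw [integral_congr_ae (Filter.Eventually.of_forall h1), integral_comp_abs (f := nuDensity p),
    ← integral_const_mul, integral_Ioi_nuDensity hp]

lemma integrable_nuDensity {p : ℝ} (hp : 0 < p) : Integrable (nuDensity p) := by
  by_contra h
  have := integral_nuDensity hp
  rw [integral_undef h] at this
  exact zero_ne_one this

/-- Under `ν_p` the variable `|y| ^ p` has the Gamma law of shape `1 / p`; this is where `p ≤ 1` is
used. -/
lemma isGammaCDF_nuCDF {p : ℝ} (hp : 0 < p) (hp1 : p ≤ 1) :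
    IsGammaCDF (1 / Real.Gamma (1 + 1 / p) * (1 / p)) (1 / p) (nuCDF p) := by
  have hG : 0 < Real.Gamma (1 + 1 / p) := Real.Gamma_pos_of_pos (by positivity)
  have hc : Continuous fun y => 2 * nuDensity p y := (continuous_nuDensity hp).const_mul 2
  have hp' : 0 < 1 / p := by positivity
  have hI : ∀ T, HasDerivAt (fun T => ∫ y in (0 : ℝ)..T, 2 * nuDensity p y)
      (2 * nuDensity p T) T := fun T => hc.integral_hasStrictDerivAt 0 T |>.hasDerivAt
  refine ⟨by positivity, by rwa [one_le_div hp], ?_, ?_, ?_, ?_⟩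
  · intro a ha
    simp only [nuCDF, max_eq_right ha, zero_rpow hp'.ne', intervalIntegral.integral_same]
  · intro a ha
    have h1 := (hI (a ^ (1 / p))).comp a (hasDerivAt_rpow_const (p := 1 / p) (Or.inl ha.ne'))
    refine (h1.congr_deriv ?_).congr_of_eventuallyEq ?_
    · simp only [nuDensity]
      rw [abs_of_pos (by positivity), ← rpow_mul ha.le, one_div_mul_cancel hp.ne', rpow_one]
      ring
    · filter_upwards [Ioi_mem_nhds ha] with x hx
      have hx : 0 < x := hx
      simp only [nuCDF, max_eq_left hx.le, Function.comp]
  · have : Continuous fun T => ∫ y in (0 : ℝ)..T, 2 * nuDensity p y :=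
      continuous_iff_continuousAt.2 fun T => (hI T).continuousAt
    exact this.comp ((continuous_id.max continuous_const).rpow_const fun _ => Or.inr hp'.le)
  · rw [← integral_Ioi_nuDensity hp]
    refine intervalIntegral_tendsto_integral_Ioi 0
      ((integrable_nuDensity hp).const_mul 2).integrableOn ?_
    refine (tendsto_rpow_atTop hp').comp ?_
    exact Filter.tendsto_atTop_mono (fun a => le_max_left a 0) Filter.tendsto_id

lemma hasRadialCDF_nu {p : ℝ} (hp : 0 < p) : HasRadialCDF p (nuCDF p) (nu p) := by
  refine ⟨⟨?_⟩, ?_, fun r hr => ?_⟩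
  · rw [nu, withDensity_apply _ MeasurableSet.univ, Measure.restrict_univ,
      ← ofReal_integral_eq_lintegral_ofReal (integrable_nuDensity hp)
        (Filter.Eventually.of_forall fun y => (nuDensity_pos hp y).le),
      integral_nuDensity hp, ENNReal.ofReal_one]
  · unfold nu; infer_instance
  · rw [nu, withDensity_apply _ measurableSet_Icc,
      ← ofReal_integral_eq_lintegral_ofReal (integrable_nuDensity hp).integrableOn
        (Filter.Eventually.of_forall fun y => (nuDensity_pos hp y).le)]
    congr 1
    have hii : ∀ a b, IntervalIntegrable (nuDensity p) volume a b := fun a b =>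
      (continuous_nuDensity hp).intervalIntegrable a b
    have heven : ∫ y in (-r)..0, nuDensity p y = ∫ y in (0 : ℝ)..r, nuDensity p y := by
      have := intervalIntegral.integral_comp_neg (a := 0) (b := r) (nuDensity p)
      rw [neg_zero] at this
      rw [← this]
      simp [nuDensity]
    rw [integral_Icc_eq_integral_Ioc, ← intervalIntegral.integral_of_le (by linarith),
      ← intervalIntegral.integral_add_adjacent_intervals (hii (-r) 0) (hii 0 r), heven, nuCDF,
      max_eq_left (by positivity), ← rpow_mul hr, mul_one_div_cancel hp.ne', rpow_one,
      intervalIntegral.integral_const_mul]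
    ring

/-- The dilation of `ν_p` by the factor `t` has the radial distribution function of `ν_p`,
rescaled by `η = t⁻ᵖ`. -/
lemma hasRadialCDF_map {p t : ℝ} (hp : 0 < p) (ht : 0 < t) :
    HasRadialCDF p (fun a => nuCDF p ((t ^ p)⁻¹ * a)) ((nu p).map (t * ·)) := by
  have h := hasRadialCDF_nu hp
  have := h.prob
  have := h.noAtoms
  have hm : Measurable (t * · : ℝ → ℝ) := measurable_const_mul t
  refine ⟨Measure.isProbabilityMeasure_map hm.aemeasurable, ⟨fun x => ?_⟩, fun r hr => ?_⟩
  · rw [Measure.map_apply hm (measurableSet_singleton x)]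
    have : (t * · : ℝ → ℝ) ⁻¹' {x} = {x / t} := by
      ext y
      simp only [mem_preimage, mem_singleton_iff, eq_div_iff ht.ne', mul_comm]
    rw [this, measure_singleton]
  · rw [Measure.map_apply hm measurableSet_Icc]
    have : (t * · : ℝ → ℝ) ⁻¹' Icc (-r) r = Icc (-(r / t)) (r / t) := by
      ext y
      rw [mem_preimage, mem_Icc, mem_Icc, ← abs_le, ← abs_le, abs_mul, abs_of_pos ht,
        le_div_iff₀ ht, mul_comm]
    rw [this, h.Icc_eq _ (by positivity), div_rpow hr ht.le, div_eq_inv_mul]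

lemma nu_pi {p : ℝ} (hp : 0 < p) (n : ℕ) :
    ((volume : Measure (Fin n → ℝ)).withDensity fun x =>
      ENNReal.ofReal (((1 / Real.Gamma (1 + 1 / p)) / 2) ^ n *
        Real.exp (-(∑ i, |x i| ^ p)))) = Measure.pi fun _ => nu p := by
  have := (hasRadialCDF_nu hp).prob
  have hprod : ∀ x : Fin n → ℝ, ((1 / Real.Gamma (1 + 1 / p)) / 2) ^ n *
      Real.exp (-(∑ i, |x i| ^ p)) = ∏ i, nuDensity p (x i) := by
    intro x
    simp only [nuDensity, Finset.prod_mul_distrib, Finset.prod_const, Finset.card_univ,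
      Fintype.card_fin, ← exp_sum, Finset.sum_neg_distrib]
  simp only [hprod]
  refine (Measure.pi_eq fun s hs => ?_).symm
  rw [withDensity_apply _ (MeasurableSet.univ_pi hs), volume_pi, Measure.restrict_pi_pi,
    ← ofReal_integral_eq_lintegral_ofReal
      (Integrable.fintype_prod fun i => (integrable_nuDensity hp).integrableOn)
      (Filter.Eventually.of_forall fun x =>
        Finset.prod_nonneg fun i _ => (nuDensity_pos hp (x i)).le),
    integral_fintype_prod_eq_prod (fun _ => nuDensity p),
    ENNReal.ofReal_prod_of_nonneg fun i _ => integral_nonneg fun y => (nuDensity_pos hp y).le]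
  refine Finset.prod_congr rfl fun i _ => ?_
  rw [nu, withDensity_apply _ (hs i),
    ← ofReal_integral_eq_lintegral_ofReal (integrable_nuDensity hp).integrableOn
      (Filter.Eventually.of_forall fun y => (nuDensity_pos hp y).le)]

/-- **S-inequality for `ν_p^n`.** For `p ∈ (0,1]`, the measure on `ℝⁿ` with density
`(c_p/2)^n · exp(-(|x 1|^p + ⋯ + |x n|^p))`, where `c_p = 1/Γ(1+1/p)`, supports the
S-inequality for all ideals in `ℝⁿ`. -/
theorem sInequality_nu_p (p : ℝ) (hp : p ∈ Set.Ioc (0 : ℝ) 1) (n : ℕ) [NeZero n] :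
    SupportsSIneq ((volume : Measure (Fin n → ℝ)).withDensity fun x =>
      ENNReal.ofReal (((1 / Real.Gamma (1 + 1 / p)) / 2) ^ n *
        Real.exp (-(∑ i, |x i| ^ p)))) := by
  obtain ⟨hp0, hp1⟩ := hp
  rw [nu_pi hp0]
  intro K hKm hKi w hw hKP t ht
  have ht0 : 0 < t := by linarith
  have h := isGammaCDF_nuCDF hp0 hp1
  have hν := hasRadialCDF_nu hp0
  have hν' := hasRadialCDF_map hp0 ht0
  have := hν.prob
  have := hν'.prob
  set η : ℝ := (t ^ p)⁻¹ with hηdef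
  have htp : 1 ≤ t ^ p := one_le_rpow ht hp0.le
  have hη : 0 < η := by positivity
  have hη1 : η ≤ 1 := inv_le_one_of_one_le₀ htp
  have hstrip : ∀ r, 0 ≤ r → Measure.pi (fun _ : Fin n => nu p) {x | |x 0| ≤ r} =
      ENNReal.ofReal (nuCDF p (r ^ p)) := by
    intro r hr
    rw [← hν.Icc_eq r hr, ← (measurePreserving_eval (fun _ : Fin n => nu p) 0).measure_preimage
      measurableSet_Icc.nullMeasurableSet]
    congr 1
    ext x
    simp [abs_le]
  have htP : t • {x : Fin n → ℝ | |x 0| ≤ w} = {x | |x 0| ≤ t * w} := by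
    ext x
    rw [mem_smul_set_iff_inv_smul_mem₀ ht0.ne']
    simp only [mem_ofPred_eq, Pi.smul_apply, smul_eq_mul, abs_mul, abs_inv, abs_of_pos ht0]
    rw [inv_mul_le_iff₀ ht0]
  have htK : t • K = (fun x i => t⁻¹ * x i) ⁻¹' K := by
    ext x
    rw [mem_smul_set_iff_inv_smul_mem₀ ht0.ne']
    rfl
  have htKm : MeasurableSet (t • K) := by
    rw [htK]
    exact (measurable_pi_iff.2 fun i => (measurable_pi_apply i).const_mul _) hKm
  have htKi : IsIdeal (t • K) := by
    intro x hx y hy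
    rw [mem_smul_set_iff_inv_smul_mem₀ ht0.ne'] at hx ⊢
    refine hKi _ hx _ fun i => ?_
    simp only [Pi.smul_apply, smul_eq_mul, abs_mul]
    exact mul_le_mul_of_nonneg_left (hy i) (abs_nonneg _)
  have hdil : Measure.pi (fun _ : Fin n => (nu p).map (t * ·)) (t • K) =
      Measure.pi (fun _ => nu p) K := by
    rw [← Measure.pi_map_pi fun _ => (measurable_const_mul t).aemeasurable, Measure.map_apply
      (measurable_pi_iff.2 fun i => (measurable_pi_apply i).const_mul _) htKm]
    congr 1
    ext x
    rw [htK, mem_preimage, mem_preimage]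
    simp [ht0.ne']
  rw [htP, hstrip _ (by positivity)]
  -- Otherwise `t • K` has the `ν_p`-measure of a strip thinner than the dilated one, and the
  -- comparison for the dilated law makes `K` smaller than the original strip.
  by_contra! hlt
  have hutop : Measure.pi (fun _ : Fin n => nu p) (t • K) ≠ ⊤ := measure_ne_top _ _
  have hult : (Measure.pi fun _ : Fin n => nu p).real (t • K) < nuCDF p ((t * w) ^ p) :=
    (ENNReal.lt_ofReal_iff_toReal_lt hutop).1 hlt
  have htw : 0 ≤ (t * w) ^ p := by positivity
  obtain ⟨a, ha, hau⟩ := h.exists_eq htw ⟨measureReal_nonneg, hult.le⟩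
  have hale : Measure.pi (fun _ : Fin n => nu p) (t • K) ≤ ENNReal.ofReal (nuCDF p a) := by
    rw [hau, ofReal_measureReal hutop]
  have hfin := ideal_le h hη hη1 hν hν' n htKm htKi ha.1 hale
  rw [hdil, hKP, hstrip w hw, ENNReal.ofReal_le_ofReal_iff (h.nonneg _)] at hfin
  have halt : a < (t * w) ^ p := by
    rw [← hau] at hult
    exact (h.strictMonoOn.lt_iff_lt ha.1 htw).1 hult
  rw [mul_rpow ht0.le hw] at halt
  have : η * a < w ^ p := by
    rw [hηdef, inv_mul_lt_iff₀ (by positivity)]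
    exact halt
  exact absurd hfin (not_le.2 (h.strictMonoOn (mul_nonneg hη.le ha.1) (rpow_nonneg hw p) this))
end
end

section
/- Let p ∈ (0,1] and α > 0, and let μ_{p,α} be the probability measure on ℝ with density α·c_p·|x|^{α−1}·exp(−|x|^{αp}), where c_p = 1/Γ(1+1/p). Then the product measure μ_{p,α}^n = μ_{p,α}^{⊗n} on ℝ^n supports the S-inequality for all ideals: for every ideal K ⊆ ℝ^n, every strip P = {x : |x_1| ≤ w} with μ_{p,α}^n(K) = μ_{p,α}^n(P), and every t ≥ 1, one has μ_{p,α}^n(tK) ≥ μ_{p,α}^n(tP). -/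
/-!
The density has total mass `2`, so `μ_{p,α}` is replaced by the probability measure
`ν = μ_{p,α} / 2`; this divides both sides by `2 ^ n`. For fixed `t ≥ 1` let `ν'` be the image of
`ν` under `x ↦ x / t`, so that `ν^n (t K) = ν'^n K`. In dimension one all ideals are symmetric
intervals, hence `ν' I = ψ (ν I)` for a single function `ψ : [0, 1] → [0, 1]`, and the theorem
becomes `ψ (ν^n K) ≤ ν'^n K` for every ideal `K`, with equality for strips.

*Tensorization* (`profile_le_pi`). By induction on `n` and Fubini it suffices that
`ψ ((ν ⊗ κ) A) ≤ ∫ ψ (κ A_y) dν'(y)` when the sections `A^z ⊆ ℝ` are nested intervals. With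
`X z = ν (A^z)` and `m = ∫ X dκ`, the measure `κ` is a mixture of two-point measures on pairs
`(z, z')` with `X z ≤ m < X z'` for which `X` has mean `m` (`exists_two_point_mixture`). As `ψ` is
concave, Jensen's inequality reduces the claim to such pairs, where it reads
`ψ (a + c (b - a)) ≤ ψ a + ψ c (ψ b - ψ a)`: after rescaling, `ψ` restricted to `[a, b]` lies
below `ψ`.

*The chord inequality* (`chord_gammaProfile`). If `x` has law `ν`, then `|x|^(αp)` is Gamma
distributed with shape `k = 1/p ≥ 1`. Writing `F` for its distribution function, one has
`ψ (F x) = F (τ x)` with `τ = t^(αp)`, so `ψ' (F x) = τ^k exp (-(τ - 1) x)`, which is decreasing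
in `x`; thus `ψ` is concave. By Cauchy's mean value theorem the chord inequality follows once
`ψ' (a + c (b - a)) / ψ' c` is nondecreasing in `c`, that is, once the map `z ↦ ζ` defined by
`F ζ = a + (b - a) F z` has `ζ - z` nonincreasing. This holds because `F` and `1 - F` are both
log-concave (`quantile_shift_le`), which is where `k ≥ 1`, i.e. `p ≤ 1`, enters.
-/

open MeasureTheory Real Set Pointwise

noncomputable section

/-! ### Tensorization -/

/-- The properties of `ψ` that make the one-dimensional relation `ν' I = ψ (ν I)` tensorize.
Only the values on `[0, 1]` matter; monotonicity on the whole line is required for measurability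
of compositions. -/
structure IsProfile (ψ : ℝ → ℝ) : Prop where
  mono : Monotone ψ
  zero : ψ 0 = 0
  one : ψ 1 = 1
  cont : ContinuousOn ψ (Icc 0 1)
  concave : ConcaveOn ℝ (Icc 0 1) ψ
  chord : ∀ a b c : ℝ, 0 ≤ a → a < b → b ≤ 1 → c ∈ Icc (0 : ℝ) 1 →
    ψ (a + c * (b - a)) ≤ ψ a + ψ c * (ψ b - ψ a)

lemma IsProfile.mem {ψ : ℝ → ℝ} (hψ : IsProfile ψ) {x : ℝ} (hx : x ∈ Icc (0 : ℝ) 1) :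
    ψ x ∈ Icc (0 : ℝ) 1 :=
  ⟨hψ.zero ▸ hψ.mono hx.1, hψ.one ▸ hψ.mono hx.2⟩

lemma integrable_of_mem_Icc {Ω : Type*} [MeasurableSpace Ω] (ρ : Measure Ω) [IsFiniteMeasure ρ]
    {f : Ω → ℝ} (hf : Measurable f) (h01 : ∀ ω, f ω ∈ Icc (0 : ℝ) 1) : Integrable f ρ :=
  Integrable.of_bound hf.aestronglyMeasurable 1 <| .of_forall fun ω => by
    rw [Real.norm_eq_abs, abs_of_nonneg (h01 ω).1]; exact (h01 ω).2

/-- If `h y = ∫ g (y, ω) dρ(ω)` is a mixture, a lower bound `c` for `∫ ψ (g (·, ω)) dν'` valid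
for almost every component `ω` holds for `∫ ψ ∘ h dν'`: the functional is concave. -/
lemma le_integral_profile_of_mixture {Ω : Type*} [MeasurableSpace Ω] (ρ : Measure Ω)
    [IsProbabilityMeasure ρ] (ν' : Measure ℝ) [IsProbabilityMeasure ν'] {ψ : ℝ → ℝ}
    (hψ : IsProfile ψ) (g : ℝ × Ω → ℝ) (hg : Measurable g) (h01 : ∀ q, g q ∈ Icc (0 : ℝ) 1)
    (c : ℝ) (hc : ∀ᵐ ω ∂ρ, c ≤ ∫ y, ψ (g (y, ω)) ∂ν') :
    c ≤ ∫ y, ψ (∫ ω, g (y, ω) ∂ρ) ∂ν' := by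
  have hm : Measurable (fun q => ψ (g q)) := hψ.mono.measurable.comp hg
  have hI : Integrable (fun q => ψ (g q)) (ν'.prod ρ) :=
    integrable_of_mem_Icc _ hm fun q => hψ.mem (h01 q)
  have hI' : Integrable (fun q => ψ (g (q.2, q.1))) (ρ.prod ν') :=
    integrable_of_mem_Icc _ (hm.comp measurable_swap) fun q => hψ.mem (h01 _)
  calc c = ∫ _, c ∂ρ := by simp
    _ ≤ ∫ ω, ∫ y, ψ (g (y, ω)) ∂ν' ∂ρ :=
        integral_mono_ae (integrable_const _) hI'.integral_prod_left hc
    _ = ∫ y, ∫ ω, ψ (g (y, ω)) ∂ρ ∂ν' :=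
        integral_integral_swap (f := fun ω y => ψ (g (y, ω))) hI'
    _ ≤ ∫ y, ψ (∫ ω, g (y, ω) ∂ρ) ∂ν' := by
        have hgi : ∀ y, Integrable (fun ω => g (y, ω)) ρ := fun y =>
          integrable_of_mem_Icc _ (hg.comp measurable_prodMk_left) fun ω => h01 _
        have hmem : ∀ y, ∫ ω, g (y, ω) ∂ρ ∈ Icc (0 : ℝ) 1 := fun y =>
          ⟨integral_nonneg fun ω => (h01 _).1, by
            calc ∫ ω, g (y, ω) ∂ρ ≤ ∫ _, (1 : ℝ) ∂ρ :=
                  integral_mono (hgi y) (integrable_const _) fun ω => (h01 _).2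
              _ = 1 := by simp⟩
        refine integral_mono hI.integral_prod_left ?_ fun y => ?_
        · refine integrable_of_mem_Icc _ (hψ.mono.measurable.comp ?_) fun y => hψ.mem (hmem y)
          exact hg.stronglyMeasurable.integral_prod_right'.measurable
        · exact hψ.concave.le_map_integral hψ.cont isClosed_Icc (.of_forall fun ω => h01 _)
            (hgi y) (integrable_of_mem_Icc _ (hm.comp measurable_prodMk_left)
              fun ω => hψ.mem (h01 _))

/-- Decomposition of a probability measure `κ` into two-point measures, on pairs
`(z, z')` with `X z ≤ m < X z'`, under each of which `X` has the same mean `m` as under `κ`.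
The excluded case `∫ max (X - m) 0 = 0` is that of `X` being almost surely constant. -/
lemma exists_two_point_mixture {Ω : Type*} [MeasurableSpace Ω] (κ : Measure Ω)
    [IsProbabilityMeasure κ] (X : Ω → ℝ) (hX : Measurable X) (h01 : ∀ ω, X ω ∈ Icc (0 : ℝ) 1)
    (m : ℝ) (hm : ∫ ω, X ω ∂κ = m) (hZ : ∫ ω, max (X ω - m) 0 ∂κ ≠ 0) :
    ∃ ρ : Measure (Ω × Ω), IsProbabilityMeasure ρ ∧ (∀ᵐ q ∂ρ, X q.1 ≤ m ∧ m < X q.2) ∧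
      ∀ f : Ω → ℝ, Measurable f → (∀ ω, f ω ∈ Icc (0 : ℝ) 1) →
        ∫ q, ((X q.2 - m) / (X q.2 - X q.1) * f q.1 + (m - X q.1) / (X q.2 - X q.1) * f q.2) ∂ρ
          = ∫ ω, f ω ∂κ := by
  classical
  have hXi : Integrable X κ := integrable_of_mem_Icc _ hX h01
  set Z := ∫ ω, max (X ω - m) 0 ∂κ with hZdef
  have hp : Integrable (fun ω => max (X ω - m) 0) κ := (hXi.sub (integrable_const m)).pos_part
  have hn : Integrable (fun ω => max (m - X ω) 0) κ :=
    ((integrable_const m).sub hXi).pos_part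
  have hZ' : ∫ ω, max (m - X ω) 0 ∂κ = Z := by
    have h : Z - ∫ ω, max (m - X ω) 0 ∂κ = 0 := by
      rw [hZdef, ← integral_sub hp hn]
      calc ∫ ω, (max (X ω - m) 0 - max (m - X ω) 0) ∂κ = ∫ ω, (X ω - m) ∂κ := by
            refine integral_congr_ae (.of_forall fun ω => ?_)
            simp only
            rcases le_total (X ω) m with h | h
            · rw [max_eq_right (by linarith), max_eq_left (by linarith)]; ring
            · rw [max_eq_left (by linarith), max_eq_right (by linarith)]; ring
        _ = 0 := by rw [integral_sub hXi (integrable_const _)]; simp [hm]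
    linarith
  have hZpos : 0 < Z := lt_of_le_of_ne (integral_nonneg fun ω => le_max_right _ _) (Ne.symm hZ)
  -- With this weight the masses at the two points become `(X q.2 - m) / Z` and `(m - X q.1) / Z`,
  -- so that each term of the mixture is a product of functions of `q.1` and `q.2`.
  set W : Ω × Ω → ℝ := fun q =>
    if X q.1 ≤ m ∧ m < X q.2 then (X q.2 - X q.1) / Z else 0 with hW
  have hS : MeasurableSet {q : Ω × Ω | X q.1 ≤ m ∧ m < X q.2} :=
    (measurableSet_le (hX.comp measurable_fst) measurable_const).inter
      (measurableSet_lt measurable_const (hX.comp measurable_snd))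
  have hWm : Measurable W := by
    refine Measurable.ite hS ?_ measurable_const
    exact ((hX.comp measurable_snd).sub (hX.comp measurable_fst)).div_const _
  have hW0 : ∀ q, 0 ≤ W q := fun q => by
    simp only [hW]; split_ifs with h
    · exact div_nonneg (by linarith [h.1, h.2]) hZpos.le
    · exact le_rfl
  have key : ∀ f : Ω → ℝ, Measurable f → (∀ ω, f ω ∈ Icc (0 : ℝ) 1) →
      Integrable (fun q => W q * ((X q.2 - m) / (X q.2 - X q.1) * f q.1
        + (m - X q.1) / (X q.2 - X q.1) * f q.2)) (κ.prod κ) ∧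
      ∫ q, W q * ((X q.2 - m) / (X q.2 - X q.1) * f q.1
        + (m - X q.1) / (X q.2 - X q.1) * f q.2) ∂(κ.prod κ) = ∫ ω, f ω ∂κ := by
    intro f hf hf01
    have hS1 : MeasurableSet {ω | X ω ≤ m} := measurableSet_le hX measurable_const
    have hfi : Integrable f κ := integrable_of_mem_Icc _ hf hf01
    have hf1 : Integrable ({ω | X ω ≤ m}.indicator f) κ := hfi.indicator hS1
    have hf2 : Integrable ({ω | X ω ≤ m}ᶜ.indicator f) κ := hfi.indicator hS1.compl
    have hfun : (fun q : Ω × Ω => W q * ((X q.2 - m) / (X q.2 - X q.1) * f q.1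
        + (m - X q.1) / (X q.2 - X q.1) * f q.2)) = fun q =>
        ({ω | X ω ≤ m}.indicator f q.1 * (max (X q.2 - m) 0 / Z)) +
        ((max (m - X q.1) 0 / Z) * {ω | X ω ≤ m}ᶜ.indicator f q.2) := by
      funext q
      simp only [hW, indicator, mem_ofPred_eq, mem_compl_iff, not_le]
      by_cases h1 : X q.1 ≤ m <;> by_cases h2 : m < X q.2
      · have : X q.2 - X q.1 ≠ 0 := by linarith
        rw [max_eq_left (by linarith), max_eq_left (by linarith)]
        simp only [h1, h2, and_self, if_true]
        field_simp
      · rw [max_eq_right (by linarith)]; simp [h2]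
      · rw [max_eq_right (a := m - X q.1) (by linarith)]; simp [h1]
      · rw [max_eq_right (a := m - X q.1) (by linarith)]; simp [h1]
    have i1 := hf1.mul_prod (hp.div_const Z)
    have i2 := (hn.div_const Z).mul_prod hf2
    rw [hfun]
    refine ⟨i1.add i2, ?_⟩
    rw [integral_add i1 i2, integral_prod_mul _ (fun ω => max (X ω - m) 0 / Z),
      integral_prod_mul (fun ω => max (m - X ω) 0 / Z), integral_div, integral_div, hZ', ← hZdef,
      div_self hZpos.ne', mul_one, one_mul, integral_indicator hS1, integral_indicator hS1.compl,
      integral_add_compl hS1 hfi]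
  refine ⟨(κ.prod κ).withDensity fun q => ENNReal.ofReal (W q), ⟨?_⟩, ?_, ?_⟩
  · have h1 := key (fun _ => 1) measurable_const (fun _ => by simp)
    have hWeq : (fun q : Ω × Ω => W q * ((X q.2 - m) / (X q.2 - X q.1) * 1
        + (m - X q.1) / (X q.2 - X q.1) * 1)) = W := by
      funext q
      by_cases h : X q.1 ≤ m ∧ m < X q.2
      · have : X q.2 - X q.1 ≠ 0 := by linarith [h.1, h.2]
        field_simp; ring
      · simp [hW, h]
    simp only [hWeq] at h1
    rw [withDensity_apply _ MeasurableSet.univ, Measure.restrict_univ,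
      ← ofReal_integral_eq_lintegral_ofReal h1.1 (.of_forall hW0), h1.2]
    simp
  · rw [ae_withDensity_iff hWm.ennreal_ofReal]
    refine .of_forall fun q hq => ?_
    by_contra h
    exact hq (by simp [hW, h])
  · intro f hf hf01
    rw [integral_withDensity_eq_integral_toReal_smul hWm.ennreal_ofReal
      (.of_forall fun q => ENNReal.ofReal_lt_top)]
    simp only [ENNReal.toReal_ofReal (hW0 _), smul_eq_mul]
    exact (key f hf hf01).2

/-- The two-factor case of tensorization, for a set whose sections along the line are nested. -/
lemma profile_le_integral_sections {Ω : Type*} [MeasurableSpace Ω] (κ : Measure Ω)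
    [IsProbabilityMeasure κ] (ν ν' : Measure ℝ) [IsProbabilityMeasure ν] [IsProbabilityMeasure ν']
    {ψ : ℝ → ℝ} (hψ : IsProfile ψ) (A : Set (ℝ × Ω)) (hA : MeasurableSet A)
    (hnest : ∀ z z', ν.real {y | (y, z) ∈ A} < ν.real {y | (y, z') ∈ A} →
      {y | (y, z) ∈ A} ⊆ {y | (y, z') ∈ A})
    (hsec : ∀ z, ν'.real {y | (y, z) ∈ A} = ψ (ν.real {y | (y, z) ∈ A})) :
    ψ ((ν.prod κ).real A) ≤ ∫ y, ψ (κ.real {z | (y, z) ∈ A}) ∂ν' := by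
  classical
  set X : Ω → ℝ := fun z => ν.real {y | (y, z) ∈ A} with hXdef
  have hX : Measurable X := (measurable_measure_prodMk_right hA).ennreal_toReal
  have hX01 : ∀ z, X z ∈ Icc (0 : ℝ) 1 := fun z => ⟨measureReal_nonneg, measureReal_le_one⟩
  set m := (ν.prod κ).real A with hmdef
  have hm : ∫ z, X z ∂κ = m := by
    rw [hmdef, measureReal_def, Measure.prod_apply_symm hA,
      ← integral_toReal (measurable_measure_prodMk_right hA).aemeasurable
        (.of_forall fun z => measure_lt_top _ _)]
    rfl
  have hs1 : ∀ y, MeasurableSet {z | (y, z) ∈ A} := fun y => measurable_prodMk_left hA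
  have hs2 : ∀ z, MeasurableSet {y | (y, z) ∈ A} := fun z => measurable_prodMk_right hA
  set χ : ℝ × Ω → ℝ := A.indicator 1 with hχ
  have hχm : Measurable χ := measurable_one.indicator hA
  have hχ01 : ∀ q, χ q ∈ Icc (0 : ℝ) 1 := fun q => by
    by_cases h : q ∈ A <;> simp [hχ, h]
  have hχκ : ∀ y, ∫ z, χ (y, z) ∂κ = κ.real {z | (y, z) ∈ A} := fun y => by
    rw [← integral_indicator_one (hs1 y)]; rfl
  have hχν : ∀ z, ∫ y, χ (y, z) ∂ν' = ν'.real {y | (y, z) ∈ A} := fun z => by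
    rw [← integral_indicator_one (hs2 z)]; rfl
  have hχi : ∀ z, Integrable (fun y => χ (y, z)) ν' := fun z =>
    integrable_of_mem_Icc _ (hχm.comp measurable_prodMk_right) fun y => hχ01 _
  by_cases hZ : ∫ z, max (X z - m) 0 ∂κ = 0
  -- `X = m` almost surely: the sections themselves are the components of the mixture.
  · have hXi : Integrable X κ := integrable_of_mem_Icc _ hX hX01
    have h1 : ∀ᵐ z ∂κ, X z ≤ m := by
      have := (integral_eq_zero_iff_of_nonneg (fun z => le_max_right _ _)
        (hXi.sub (integrable_const m)).pos_part).1 hZ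
      filter_upwards [this] with z hz
      have : max (X z - m) 0 = 0 := hz
      linarith [le_max_left (X z - m) 0]
    have h2 : X =ᵐ[κ] fun _ => m :=
      (integral_eq_iff_of_ae_le hXi (integrable_const m) h1).1 (by simp [hm])
    have := le_integral_profile_of_mixture κ ν' hψ χ hχm hχ01 (ψ m) <| by
      filter_upwards [h2] with z hz
      have : ∀ y, ψ (χ (y, z)) = χ (y, z) := fun y => by
        by_cases h : (y, z) ∈ A <;> simp [hχ, h, hψ.zero, hψ.one]
      simp only [this, hχν, hsec]
      exact le_of_eq (by rw [← hz])
    simpa only [hχκ] using this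
  obtain ⟨ρ, hρ, hgood, hmix⟩ := exists_two_point_mixture κ X hX hX01 m hm hZ
  set e : ℝ × (Ω × Ω) → ℝ := fun r =>
    (X r.2.2 - m) / (X r.2.2 - X r.2.1) * χ (r.1, r.2.1)
      + (m - X r.2.1) / (X r.2.2 - X r.2.1) * χ (r.1, r.2.2) with he
  have hem : Measurable e := by
    simp only [he]; fun_prop
  -- `e` is the mixture component; the truncation `g` differs from it only on a null set of pairs
  -- and takes values in `[0, 1]` everywhere.
  set g : ℝ × (Ω × Ω) → ℝ := fun r => max 0 (min 1 (e r)) with hg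
  have hge : ∀ q : Ω × Ω, X q.1 ≤ m → m < X q.2 → ∀ y, g (y, q) = e (y, q) := by
    intro q h1 h2 y
    have hd : 0 < X q.2 - X q.1 := by linarith
    have hu : 0 ≤ (X q.2 - m) / (X q.2 - X q.1) := div_nonneg (by linarith) hd.le
    have hv : 0 ≤ (m - X q.1) / (X q.2 - X q.1) := div_nonneg (by linarith) hd.le
    have huv : (X q.2 - m) / (X q.2 - X q.1) + (m - X q.1) / (X q.2 - X q.1) = 1 := by
      field_simp; ring
    have e0 : 0 ≤ e (y, q) :=
      add_nonneg (mul_nonneg hu (hχ01 _).1) (mul_nonneg hv (hχ01 _).1)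
    have e1 : e (y, q) ≤ 1 := by
      rw [← huv]
      exact add_le_add (mul_le_of_le_one_right hu (hχ01 _).2)
        (mul_le_of_le_one_right hv (hχ01 _).2)
    simp only [hg]
    rw [min_eq_right e1, max_eq_right e0]
  have := le_integral_profile_of_mixture ρ ν' hψ g (by fun_prop)
    (fun r => ⟨le_max_left _ _, max_le zero_le_one (min_le_left _ _)⟩) (ψ m) <| by
      filter_upwards [hgood] with q ⟨h1, h2⟩
      have hd : 0 < X q.2 - X q.1 := by linarith
      set θ := (m - X q.1) / (X q.2 - X q.1) with hθ
      have hθ' : (X q.2 - m) / (X q.2 - X q.1) = 1 - θ := by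
        rw [hθ]; field_simp; ring
      have hsub := hnest q.1 q.2 (by linarith)
      -- `g (·, q)` equals `1` on the smaller section, `θ` on the rest of the larger one, and `0`
      -- elsewhere.
      have : ∀ y, ψ (g (y, q)) = χ (y, q.1) + ψ θ * (χ (y, q.2) - χ (y, q.1)) := by
        intro y
        rw [hge q h1 h2]
        simp only [he, hθ', ← hθ]
        by_cases hy1 : (y, q.1) ∈ A
        · have hy2 : (y, q.2) ∈ A := hsub hy1
          simp [hχ, hy1, hy2, hψ.one]
        · by_cases hy2 : (y, q.2) ∈ A <;> simp [hχ, hy1, hy2, hψ.zero]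
      simp only [this]
      have hi : Integrable (fun y => ψ θ * (χ (y, q.2) - χ (y, q.1))) ν' :=
        ((hχi _).sub (hχi _)).const_mul _
      rw [integral_add (hχi _) hi, integral_const_mul,
        integral_sub (hχi _) (hχi _), hχν, hχν, hsec, hsec]
      have hc := hψ.chord (X q.1) (X q.2) θ (hX01 _).1 (by linarith) (hX01 _).2
        ⟨div_nonneg (by linarith) hd.le, (div_le_one hd).2 (by linarith)⟩
      have : X q.1 + θ * (X q.2 - X q.1) = m := by
        rw [hθ, div_mul_cancel₀ _ hd.ne']; ring
      rwa [this] at hc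
  refine this.trans (le_of_eq (integral_congr_ae (.of_forall fun y => ?_)))
  simp only
  congr 1
  rw [← hχκ, ← hmix (fun z => χ (y, z)) (hχm.comp measurable_prodMk_left) fun z => hχ01 _]
  refine integral_congr_ae ?_
  filter_upwards [hgood] with q ⟨h1, h2⟩
  exact hge q h1 h2 y

/-- An ideal of the line, that is, an interval symmetric about the origin, possibly empty or
unbounded. -/
def IsLineIdeal (I : Set ℝ) : Prop := ∀ x ∈ I, ∀ y : ℝ, |y| ≤ |x| → y ∈ I

lemma IsLineIdeal.subset_or_subset {I J : Set ℝ} (hI : IsLineIdeal I) (hJ : IsLineIdeal J) :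
    I ⊆ J ∨ J ⊆ I := by
  by_contra! h
  obtain ⟨⟨x, hx, hx'⟩, ⟨y, hy, hy'⟩⟩ := And.imp not_subset.1 not_subset.1 h
  rcases le_total |x| |y| with h | h
  · exact hx' (hJ y hy x h)
  · exact hy' (hI x hx y h)

/-- Tensorization: a one-dimensional relation `ν' I = ψ (ν I)` on symmetric intervals implies
`ψ (ν^n K) ≤ ν'^n K` for all ideals `K`. -/
theorem profile_le_pi (ν ν' : Measure ℝ) [IsProbabilityMeasure ν] [IsProbabilityMeasure ν']
    {ψ : ℝ → ℝ} (hψ : IsProfile ψ)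
    (hline : ∀ I : Set ℝ, MeasurableSet I → IsLineIdeal I → ν'.real I = ψ (ν.real I)) (n : ℕ) :
    ∀ K : Set (Fin n → ℝ), MeasurableSet K → IsIdeal K →
      ψ ((Measure.pi fun _ => ν).real K) ≤ (Measure.pi fun _ => ν').real K := by
  induction n with
  | zero =>
    intro K hK _
    rcases Subsingleton.eq_empty_or_singleton (s := K) (Set.subsingleton_of_subsingleton)
      with rfl | ⟨x, rfl⟩
    · simp [hψ.zero]
    · have : ({x} : Set (Fin 0 → ℝ)) = univ := Set.eq_univ_of_forall fun y => Subsingleton.elim _ _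
      simp [this, hψ.one]
  | succ n ih =>
    intro K hK hid
    have hcons : Measurable fun r : ℝ × (Fin n → ℝ) => (Fin.cons r.1 r.2 : Fin (n + 1) → ℝ) :=
      measurable_pi_iff.2 fun i => by
        refine Fin.cases ?_ (fun j => ?_) i
        · simpa using measurable_fst
        · simp only [Fin.cons_succ]; fun_prop
    set A : Set (ℝ × (Fin n → ℝ)) := {r | (Fin.cons r.1 r.2 : Fin (n + 1) → ℝ) ∈ K} with hAdef
    have hA : MeasurableSet A := hcons hK
    have hprod : ∀ (η : Measure ℝ) [IsProbabilityMeasure η],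
        (Measure.pi fun _ : Fin (n + 1) => η).real K
          = (η.prod (Measure.pi fun _ : Fin n => η)).real A := by
      intro η _
      have h := measurePreserving_piFinSuccAbove (fun _ : Fin (n + 1) => η) 0
      rw [measureReal_def, measureReal_def, ← h.measure_preimage hA.nullMeasurableSet]
      congr 2
      ext x
      simp only [hAdef, mem_preimage, mem_ofPred_eq, MeasurableEquiv.piFinSuccAbove_apply]
      rw [show (Fin.cons ((Fin.insertNthEquiv (fun _ => ℝ) 0).symm x).1
        ((Fin.insertNthEquiv (fun _ => ℝ) 0).symm x).2 : Fin (n + 1) → ℝ) = x by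
          exact Fin.cons_self_tail x]
    have hcol : ∀ z, IsLineIdeal {y | (y, z) ∈ A} := fun z x hx y hy =>
      hid _ hx _ fun i => by
        refine Fin.cases ?_ (fun j => ?_) i
        · simpa using hy
        · simp
    have hrow : ∀ y, IsIdeal {z | (y, z) ∈ A} := fun y x hx z hz =>
      hid _ hx _ fun i => by
        refine Fin.cases ?_ (fun j => ?_) i
        · simp
        · simpa using hz j
    have hrowm : ∀ y, MeasurableSet {z | (y, z) ∈ A} := fun y => measurable_prodMk_left hA
    rw [hprod ν, hprod ν']
    calc ψ ((ν.prod (Measure.pi fun _ => ν)).real A)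
        ≤ ∫ y, ψ ((Measure.pi fun _ => ν).real {z | (y, z) ∈ A}) ∂ν' := by
          refine profile_le_integral_sections _ ν ν' hψ A hA (fun z z' hlt => ?_) fun z => ?_
          · refine ((hcol z).subset_or_subset (hcol z')).resolve_right fun hsub => ?_
            exact hlt.not_ge (measureReal_mono hsub)
          · exact hline _ (measurable_prodMk_right hA) (hcol z)
      _ ≤ ∫ y, (Measure.pi fun _ => ν').real {z | (y, z) ∈ A} ∂ν' := by
          refine integral_mono (integrable_of_mem_Icc _ ?_ fun y => hψ.mem ?_)
            (integrable_of_mem_Icc _ ?_ fun y => ?_) fun y => ih _ (hrowm y) (hrow y)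
          · exact hψ.mono.measurable.comp (measurable_measure_prodMk_left hA).ennreal_toReal
          · exact ⟨measureReal_nonneg, measureReal_le_one⟩
          · exact (measurable_measure_prodMk_left hA).ennreal_toReal
          · exact ⟨measureReal_nonneg, measureReal_le_one⟩
      _ = (ν'.prod (Measure.pi fun _ => ν')).real A := by
          rw [measureReal_def, Measure.prod_apply hA,
            ← integral_toReal (measurable_measure_prodMk_left hA).aemeasurable
              (.of_forall fun z => measure_lt_top _ _)]
          rfl

/-! ### The Gamma distribution and its dilation profile -/

/-- The density at `x ≥ 0` of the Gamma distribution with shape `k` and rate `1`. -/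
def gammaDens (k x : ℝ) : ℝ := Real.exp (-x) * x ^ (k - 1) / Real.Gamma k

/-- The distribution function at `x ≥ 0` of the Gamma distribution with shape `k`, rate `1`. -/
def gammaDist (k x : ℝ) : ℝ := ∫ v in (0 : ℝ)..x, gammaDens k v

section GammaDist

variable {k : ℝ}

lemma gammaDens_pos (hk : 1 ≤ k) {x : ℝ} (hx : 0 < x) : 0 < gammaDens k x := by
  have := Real.Gamma_pos_of_pos (show 0 < k by linarith)
  unfold gammaDens; positivity

lemma continuous_gammaDens (hk : 1 ≤ k) : Continuous (gammaDens k) := by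
  unfold gammaDens
  refine ((Real.continuous_exp.comp continuous_neg).mul ?_).div_const _
  exact Real.continuous_rpow_const (by linarith)

/-- Log-concavity of the Gamma density, in multiplicative form. -/
lemma gammaDens_mul_le (hk : 1 ≤ k) {x y δ : ℝ} (hx : 0 < x) (hxy : x ≤ y) (hδ : 0 ≤ δ) :
    gammaDens k x * gammaDens k (y + δ) ≤ gammaDens k (x + δ) * gammaDens k y := by
  have hG := Real.Gamma_pos_of_pos (show 0 < k by linarith)
  have hpow : x ^ (k - 1) * (y + δ) ^ (k - 1) ≤ (x + δ) ^ (k - 1) * y ^ (k - 1) := by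
    rw [← Real.mul_rpow hx.le (by linarith), ← Real.mul_rpow (by linarith) (by linarith)]
    refine Real.rpow_le_rpow (mul_nonneg hx.le (by linarith)) ?_ (by linarith)
    nlinarith
  have hexp : Real.exp (-x) * Real.exp (-(y + δ)) = Real.exp (-(x + δ)) * Real.exp (-y) := by
    rw [← Real.exp_add, ← Real.exp_add]; ring_nf
  unfold gammaDens
  rw [div_mul_div_comm, div_mul_div_comm]
  refine div_le_div_of_nonneg_right ?_ (by positivity)
  calc Real.exp (-x) * x ^ (k - 1) * (Real.exp (-(y + δ)) * (y + δ) ^ (k - 1))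
      = (Real.exp (-x) * Real.exp (-(y + δ))) * (x ^ (k - 1) * (y + δ) ^ (k - 1)) := by ring
    _ ≤ (Real.exp (-x) * Real.exp (-(y + δ))) * ((x + δ) ^ (k - 1) * y ^ (k - 1)) := by gcongr
    _ = _ := by rw [hexp]; ring

lemma gammaDist_zero : gammaDist k 0 = 0 := by simp [gammaDist]

lemma hasDerivAt_gammaDist (hk : 1 ≤ k) (x : ℝ) :
    HasDerivAt (gammaDist k) (gammaDens k x) x :=
  ((continuous_gammaDens hk).integral_hasStrictDerivAt 0 x).hasDerivAt

lemma continuous_gammaDist (hk : 1 ≤ k) : Continuous (gammaDist k) :=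
  continuous_iff_continuousAt.2 fun x => (hasDerivAt_gammaDist hk x).continuousAt

lemma strictMonoOn_gammaDist (hk : 1 ≤ k) : StrictMonoOn (gammaDist k) (Ici 0) := by
  refine strictMonoOn_of_deriv_pos (convex_Ici 0) (continuous_gammaDist hk).continuousOn
    fun x hx => ?_
  rw [interior_Ici] at hx
  rw [(hasDerivAt_gammaDist hk x).deriv]
  exact gammaDens_pos hk hx

lemma tendsto_gammaDist (hk : 1 ≤ k) :
    Filter.Tendsto (gammaDist k) Filter.atTop (nhds 1) := by
  have hk0 : 0 < k := by linarith
  have h := intervalIntegral_tendsto_integral_Ioi (0 : ℝ)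
    ((Real.GammaIntegral_convergent hk0).div_const (Real.Gamma k)) Filter.tendsto_id
  rw [integral_div, ← Real.Gamma_eq_integral hk0,
    div_self (Real.Gamma_pos_of_pos hk0).ne'] at h
  exact h

lemma gammaDist_lt_one (hk : 1 ≤ k) {x : ℝ} (hx : 0 ≤ x) : gammaDist k x < 1 := by
  have h1 : gammaDist k x < gammaDist k (x + 1) :=
    strictMonoOn_gammaDist hk hx (show (0 : ℝ) ≤ x + 1 by linarith) (by linarith)
  refine h1.trans_le (ge_of_tendsto (tendsto_gammaDist hk) ?_)
  filter_upwards [Filter.eventually_ge_atTop (x + 1)] with y hy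
  exact (strictMonoOn_gammaDist hk).monotoneOn (show (0 : ℝ) ≤ x + 1 by linarith)
    (show (0 : ℝ) ≤ y by linarith) hy

lemma gammaDist_pos (hk : 1 ≤ k) {x : ℝ} (hx : 0 < x) : 0 < gammaDist k x := by
  simpa [gammaDist_zero] using strictMonoOn_gammaDist hk (show (0 : ℝ) ∈ Ici 0 by simp) hx.le hx

lemma exists_gammaDist_eq (hk : 1 ≤ k) {u : ℝ} (hu : u ∈ Ioo (0 : ℝ) 1) :
    ∃ x ∈ Ioi (0 : ℝ), gammaDist k x = u := by
  obtain ⟨N, hN0, hN⟩ := ((Filter.eventually_ge_atTop (0 : ℝ)).and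
    ((tendsto_gammaDist hk).eventually (lt_mem_nhds hu.2))).exists
  obtain ⟨x, hx, rfl⟩ := intermediate_value_Icc hN0 (continuous_gammaDist hk).continuousOn
    ⟨by rw [gammaDist_zero]; exact hu.1.le, hN.le⟩
  refine ⟨x, lt_of_le_of_ne hx.1 ?_, rfl⟩
  rintro rfl
  exact hu.1.ne' gammaDist_zero

/-- `(F (y + δ) - F (x + δ)) / (F y - F x) ≤ f (x + δ) / f x`, because `f (v + δ) / f v` is
nonincreasing in `v`. -/
lemma gammaDist_sub_mul_le (hk : 1 ≤ k) {x y δ : ℝ} (hx : 0 < x) (hxy : x ≤ y) (hδ : 0 ≤ δ) :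
    (gammaDist k (y + δ) - gammaDist k (x + δ)) * gammaDens k x
      ≤ gammaDens k (x + δ) * (gammaDist k y - gammaDist k x) := by
  rcases hxy.eq_or_lt with rfl | hlt
  · simp
  obtain ⟨ξ, hξ, h⟩ := exists_ratio_hasDerivAt_eq_ratio_slope (fun v => gammaDist k (v + δ))
    (fun v => gammaDens k (v + δ)) hlt
    ((continuous_gammaDist hk).comp (continuous_add_const δ)).continuousOn
    (fun v _ => (hasDerivAt_gammaDist hk (v + δ)).comp_add_const v δ)
    (gammaDist k) (gammaDens k) (continuous_gammaDist hk).continuousOn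
    (fun v _ => hasDerivAt_gammaDist hk v)
  have hξ0 : 0 < gammaDens k ξ := gammaDens_pos hk (hx.trans hξ.1)
  have hF : 0 ≤ gammaDist k y - gammaDist k x := sub_nonneg.2 <|
    (strictMonoOn_gammaDist hk).monotoneOn hx.le (hx.le.trans hxy) hxy
  have hl := mul_le_mul_of_nonneg_left (gammaDens_mul_le hk hx hξ.1.le hδ) hF
  refine le_of_mul_le_mul_right ?_ hξ0
  linear_combination hl - gammaDens k x * h

/-- `f (y + δ) / f y ≤ (F (y + δ) - F (x + δ)) / (F y - F x)`, because `f (v + δ) / f v` is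
nonincreasing in `v`. -/
lemma le_gammaDist_sub_mul (hk : 1 ≤ k) {x y δ : ℝ} (hx : 0 ≤ x) (hxy : x ≤ y) (hy : 0 < y)
    (hδ : 0 ≤ δ) :
    gammaDens k (y + δ) * (gammaDist k y - gammaDist k x)
      ≤ (gammaDist k (y + δ) - gammaDist k (x + δ)) * gammaDens k y := by
  rcases hxy.eq_or_lt with rfl | hlt
  · simp
  obtain ⟨ξ, hξ, h⟩ := exists_ratio_hasDerivAt_eq_ratio_slope (fun v => gammaDist k (v + δ))
    (fun v => gammaDens k (v + δ)) hlt
    ((continuous_gammaDist hk).comp (continuous_add_const δ)).continuousOn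
    (fun v _ => (hasDerivAt_gammaDist hk (v + δ)).comp_add_const v δ)
    (gammaDist k) (gammaDens k) (continuous_gammaDist hk).continuousOn
    (fun v _ => hasDerivAt_gammaDist hk v)
  have hξx : 0 < ξ := hx.trans_lt hξ.1
  have hξ0 : 0 < gammaDens k ξ := gammaDens_pos hk hξx
  have hF : 0 ≤ gammaDist k y - gammaDist k x := sub_nonneg.2 <|
    (strictMonoOn_gammaDist hk).monotoneOn hx hy.le hxy
  have hl := mul_le_mul_of_nonneg_left (gammaDens_mul_le hk hξx hξ.2.le hδ) hF
  refine le_of_mul_le_mul_right ?_ hξ0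
  linear_combination hl + gammaDens k y * h

/-- The distribution function is log-concave. -/
lemma gammaDist_logConcave (hk : 1 ≤ k) {x y δ : ℝ} (hx : 0 < x) (hxy : x ≤ y) (hδ : 0 ≤ δ) :
    gammaDist k (y + δ) * gammaDist k x ≤ gammaDist k (x + δ) * gammaDist k y := by
  have h1 := gammaDist_sub_mul_le hk hx hxy hδ
  have h2 := le_gammaDist_sub_mul hk le_rfl hx.le hx hδ
  rw [gammaDist_zero, sub_zero, zero_add] at h2
  have hδF : 0 ≤ gammaDist k δ := by
    rcases hδ.eq_or_lt with rfl | h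
    · exact gammaDist_zero.ge
    · exact (gammaDist_pos hk h).le
  have hfx := gammaDens_pos hk hx
  have hFx := gammaDist_pos hk hx
  have hF : 0 ≤ gammaDist k y - gammaDist k x := sub_nonneg.2 <|
    (strictMonoOn_gammaDist hk).monotoneOn hx.le (hx.le.trans hxy) hxy
  have h3 : gammaDens k (x + δ) * gammaDist k x ≤ gammaDist k (x + δ) * gammaDens k x :=
    h2.trans (mul_le_mul_of_nonneg_right (by linarith) hfx.le)
  refine le_of_mul_le_mul_right ?_ hfx
  linear_combination gammaDist k x * h1 + (gammaDist k y - gammaDist k x) * h3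

/-- The survival function is log-concave. -/
lemma gammaSurvival_logConcave (hk : 1 ≤ k) {x y δ : ℝ} (hx : 0 < x) (hxy : x ≤ y)
    (hδ : 0 ≤ δ) :
    (1 - gammaDist k (y + δ)) * (1 - gammaDist k x)
      ≤ (1 - gammaDist k y) * (1 - gammaDist k (x + δ)) := by
  have hy : 0 < y := hx.trans_le hxy
  have h1 := le_gammaDist_sub_mul hk hx.le hxy hy hδ
  have h2 : (1 - gammaDist k (y + δ)) * gammaDens k y
      ≤ gammaDens k (y + δ) * (1 - gammaDist k y) := by
    have hl : Filter.Tendsto (fun N => (gammaDist k (N + δ) - gammaDist k (y + δ))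
        * gammaDens k y) Filter.atTop (nhds ((1 - gammaDist k (y + δ)) * gammaDens k y)) :=
      (((tendsto_gammaDist hk).comp
        (Filter.tendsto_atTop_add_const_right _ δ Filter.tendsto_id)).sub_const _).mul_const _
    have hr : Filter.Tendsto (fun N => gammaDens k (y + δ) * (gammaDist k N - gammaDist k y))
        Filter.atTop (nhds (gammaDens k (y + δ) * (1 - gammaDist k y))) :=
      ((tendsto_gammaDist hk).sub_const _).const_mul _
    refine le_of_tendsto_of_tendsto hl hr ?_
    filter_upwards [Filter.eventually_ge_atTop y] with N hN
    exact gammaDist_sub_mul_le hk hy hN hδ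
  have hfy := gammaDens_pos hk hy
  have hS : 0 < 1 - gammaDist k y := sub_pos.2 (gammaDist_lt_one hk hy.le)
  have hF : 0 ≤ gammaDist k y - gammaDist k x := sub_nonneg.2 <|
    (strictMonoOn_gammaDist hk).monotoneOn hx.le hy.le hxy
  refine le_of_mul_le_mul_right ?_ hfy
  linear_combination (1 - gammaDist k y) * h1 + (gammaDist k y - gammaDist k x) * h2

/-- The quantile transformation `z ↦ ζ` given by `F ζ = a + (F z) (b - a)` satisfies
`ζ₂ - ζ₁ ≤ z₂ - z₁`: it is a contraction. Log-concavity of `F` handles `ζ₁ ≤ z₁`, that of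
`1 - F` the opposite case. -/
lemma quantile_shift_le (hk : 1 ≤ k) {a b z₁ z₂ ζ₁ ζ₂ : ℝ} (ha : 0 ≤ a) (hab : a < b)
    (hb : b ≤ 1) (hz₁ : 0 < z₁) (hz : z₁ ≤ z₂) (hζ₁ : 0 < ζ₁) (hζ₂ : 0 < ζ₂)
    (h₁ : gammaDist k ζ₁ = a + gammaDist k z₁ * (b - a))
    (h₂ : gammaDist k ζ₂ = a + gammaDist k z₂ * (b - a)) :
    ζ₂ + z₁ ≤ ζ₁ + z₂ := by
  obtain ⟨δ, hδ, rfl⟩ : ∃ δ, 0 ≤ δ ∧ z₂ = z₁ + δ := ⟨z₂ - z₁, by linarith, by ring⟩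
  have hd : 0 < b - a := by linarith
  have hmono : 0 ≤ gammaDist k (z₁ + δ) - gammaDist k z₁ := sub_nonneg.2 <|
    (strictMonoOn_gammaDist hk).monotoneOn hz₁.le (show (0 : ℝ) ≤ z₁ + δ by linarith) hz
  have hFz := gammaDist_pos hk hz₁
  have hSz : 0 < 1 - gammaDist k z₁ := sub_pos.2 (gammaDist_lt_one hk hz₁.le)
  have key : gammaDist k ζ₂ ≤ gammaDist k (ζ₁ + δ) := by
    rcases le_total ζ₁ z₁ with h | h
    · have hl := gammaDist_logConcave hk hζ₁ h hδ
      have : 0 ≤ a * (gammaDist k (z₁ + δ) - gammaDist k z₁) := mul_nonneg ha hmono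
      refine le_of_mul_le_mul_right ?_ hFz
      rw [h₁] at hl
      rw [h₂]
      linear_combination hl + this
    · have hl := gammaSurvival_logConcave hk hz₁ h hδ
      have : 0 ≤ (1 - b) * (gammaDist k (z₁ + δ) - gammaDist k z₁) :=
        mul_nonneg (by linarith) hmono
      refine le_of_mul_le_mul_right ?_ hSz
      rw [h₁] at hl
      rw [h₂]
      linear_combination hl + this
  have := (strictMonoOn_gammaDist hk).le_iff_le (show ζ₂ ∈ Ici (0 : ℝ) from hζ₂.le)
    (show ζ₁ + δ ∈ Ici (0 : ℝ) from by simp only [mem_Ici]; linarith) |>.1 key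
  linarith

/-- The quantile function of the Gamma distribution, meaningful on `(0, 1)`. -/
def gammaQuantile (k : ℝ) : ℝ → ℝ := Function.invFunOn (gammaDist k) (Ioi 0)

lemma gammaQuantile_pos (hk : 1 ≤ k) {u : ℝ} (hu : u ∈ Ioo (0 : ℝ) 1) : 0 < gammaQuantile k u :=
  Function.invFunOn_mem (exists_gammaDist_eq hk hu)

lemma gammaDist_gammaQuantile (hk : 1 ≤ k) {u : ℝ} (hu : u ∈ Ioo (0 : ℝ) 1) :
    gammaDist k (gammaQuantile k u) = u :=
  Function.invFunOn_eq (exists_gammaDist_eq hk hu)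

lemma gammaDist_mem (hk : 1 ≤ k) {x : ℝ} (hx : 0 < x) : gammaDist k x ∈ Ioo (0 : ℝ) 1 :=
  ⟨gammaDist_pos hk hx, gammaDist_lt_one hk hx.le⟩

lemma gammaQuantile_gammaDist (hk : 1 ≤ k) {x : ℝ} (hx : 0 < x) :
    gammaQuantile k (gammaDist k x) = x :=
  (strictMonoOn_gammaDist hk).injOn (gammaQuantile_pos hk (gammaDist_mem hk hx)).le hx.le
    (gammaDist_gammaQuantile hk (gammaDist_mem hk hx))

lemma gammaQuantile_strictMonoOn (hk : 1 ≤ k) : StrictMonoOn (gammaQuantile k) (Ioo 0 1) := by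
  intro u hu v hv huv
  refine ((strictMonoOn_gammaDist hk).lt_iff_lt (gammaQuantile_pos hk hu).le
    (gammaQuantile_pos hk hv).le).1 ?_
  rwa [gammaDist_gammaQuantile hk hu, gammaDist_gammaQuantile hk hv]

lemma hasDerivAt_gammaQuantile (hk : 1 ≤ k) {u : ℝ} (hu : u ∈ Ioo (0 : ℝ) 1) :
    HasDerivAt (gammaQuantile k) (gammaDens k (gammaQuantile k u))⁻¹ u := by
  have hn : Ioo (0 : ℝ) 1 ∈ nhds u := isOpen_Ioo.mem_nhds hu
  refine HasDerivAt.of_local_left_inverse ?_ (hasDerivAt_gammaDist hk _)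
    (gammaDens_pos hk (gammaQuantile_pos hk hu)).ne' ?_
  · refine (gammaQuantile_strictMonoOn hk).continuousAt_of_image_mem_nhds hn ?_
    refine Filter.mem_of_superset (isOpen_Ioi.mem_nhds (gammaQuantile_pos hk hu)) fun x hx => ?_
    exact ⟨gammaDist k x, gammaDist_mem hk hx, gammaQuantile_gammaDist hk hx⟩
  · filter_upwards [hn] with v hv using gammaDist_gammaQuantile hk hv

/-- The function `ψ` with `F (τ x) = ψ (F x)` for the Gamma distribution function `F`, extended
by the constants `0` and `1` outside `(0, 1)`. -/
def gammaProfile (k τ u : ℝ) : ℝ :=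
  if u ≤ 0 then 0 else if 1 ≤ u then 1 else gammaDist k (τ * gammaQuantile k u)

variable {τ : ℝ}

lemma gammaProfile_of_mem {u : ℝ} (hu : u ∈ Ioo (0 : ℝ) 1) :
    gammaProfile k τ u = gammaDist k (τ * gammaQuantile k u) := by
  simp [gammaProfile, not_le.2 hu.1, not_le.2 hu.2]

lemma gammaProfile_gammaDist (hk : 1 ≤ k) {x : ℝ} (hx : 0 ≤ x) :
    gammaProfile k τ (gammaDist k x) = gammaDist k (τ * x) := by
  rcases hx.eq_or_lt with rfl | hx
  · simp [gammaDist_zero, gammaProfile]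
  · rw [gammaProfile_of_mem (gammaDist_mem hk hx), gammaQuantile_gammaDist hk hx]

lemma hasDerivAt_gammaProfile (hk : 1 ≤ k) (hτ : 1 ≤ τ) {u : ℝ} (hu : u ∈ Ioo (0 : ℝ) 1) :
    HasDerivAt (gammaProfile k τ)
      (τ ^ k * Real.exp (-((τ - 1) * gammaQuantile k u))) u := by
  have hG := gammaQuantile_pos hk hu
  have h := (hasDerivAt_gammaDist hk (τ * gammaQuantile k u)).comp u
    ((hasDerivAt_gammaQuantile hk hu).const_mul τ)
  have hval : gammaDens k (τ * gammaQuantile k u) * (τ * (gammaDens k (gammaQuantile k u))⁻¹)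
      = τ ^ k * Real.exp (-((τ - 1) * gammaQuantile k u)) := by
    set x := gammaQuantile k u
    have hτ0 : 0 < τ := by linarith
    have hΓ := Real.Gamma_pos_of_pos (show 0 < k by linarith)
    have hx : 0 < x ^ (k - 1) := Real.rpow_pos_of_pos hG _
    have e1 : Real.exp (-(τ * x)) = Real.exp (-((τ - 1) * x)) * Real.exp (-x) := by
      rw [← Real.exp_add]; ring_nf
    have e2 : τ ^ k = τ ^ (k - 1) * τ := by
      rw [← Real.rpow_add_one hτ0.ne']; ring_nf
    have := Real.exp_pos (-x)
    unfold gammaDens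
    rw [Real.mul_rpow hτ0.le hG.le, e1, e2]
    field_simp
  rw [hval] at h
  refine h.congr_of_eventuallyEq ?_
  filter_upwards [isOpen_Ioo.mem_nhds hu] with v hv using gammaProfile_of_mem hv

lemma gammaProfile_mem (hk : 1 ≤ k) (hτ : 1 ≤ τ) (u : ℝ) :
    gammaProfile k τ u ∈ Icc (0 : ℝ) 1 := by
  unfold gammaProfile
  split_ifs with h1 h2
  · simp
  · simp
  · have := gammaQuantile_pos hk (u := u) ⟨by linarith, by linarith⟩
    exact Ioo_subset_Icc_self (gammaDist_mem hk (by positivity))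

lemma monotone_gammaProfile (hk : 1 ≤ k) (hτ : 1 ≤ τ) : Monotone (gammaProfile k τ) := by
  intro u v huv
  by_cases hu : u ≤ 0
  · have := (gammaProfile_mem hk hτ v).1
    simpa [gammaProfile, hu] using this
  by_cases hv : 1 ≤ v
  · have : gammaProfile k τ v = 1 := by simp [gammaProfile, hv, show ¬ v ≤ 0 by linarith]
    rw [this]; exact (gammaProfile_mem hk hτ u).2
  have hu' : u ∈ Ioo (0 : ℝ) 1 := ⟨by linarith, by linarith⟩
  have hv' : v ∈ Ioo (0 : ℝ) 1 := ⟨by linarith, by linarith⟩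
  rw [gammaProfile_of_mem hu', gammaProfile_of_mem hv']
  have h1 := gammaQuantile_pos hk hu'
  have h2 := gammaQuantile_pos hk hv'
  refine (strictMonoOn_gammaDist hk).monotoneOn (show (0 : ℝ) ≤ _ by positivity)
    (show (0 : ℝ) ≤ _ by positivity) ?_
  exact mul_le_mul_of_nonneg_left ((gammaQuantile_strictMonoOn hk).monotoneOn hu' hv' huv)
    (by linarith)

lemma gammaProfile_zero : gammaProfile k τ 0 = 0 := by simp [gammaProfile]

lemma gammaProfile_one : gammaProfile k τ 1 = 1 := by simp [gammaProfile]

lemma continuousOn_gammaProfile (hk : 1 ≤ k) (hτ : 1 ≤ τ) :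
    ContinuousOn (gammaProfile k τ) (Icc 0 1) := by
  have hτ0 : 0 < τ := by linarith
  intro u hu
  rcases hu.1.eq_or_lt with rfl | h0
  · refine ContinuousAt.continuousWithinAt (tendsto_order.2 ⟨fun l hl => ?_, fun r hr => ?_⟩)
    · rw [gammaProfile_zero] at hl
      exact .of_forall fun v => hl.trans_le (gammaProfile_mem hk hτ v).1
    · rw [gammaProfile_zero] at hr
      obtain ⟨x, hx, hxr⟩ := exists_gammaDist_eq hk (u := min (r / 2) (1 / 2))
        ⟨by positivity, (min_le_right _ _).trans_lt (by norm_num)⟩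
      have hx' : 0 < x / τ := div_pos hx hτ0
      filter_upwards [gt_mem_nhds (gammaDist_pos hk hx')] with v hv
      calc gammaProfile k τ v ≤ gammaProfile k τ (gammaDist k (x / τ)) :=
            monotone_gammaProfile hk hτ hv.le
        _ = gammaDist k x := by
            rw [gammaProfile_gammaDist hk hx'.le, mul_div_cancel₀ _ hτ0.ne']
        _ < r := by rw [hxr]; exact (min_le_left _ _).trans_lt (by linarith)
  rcases hu.2.eq_or_lt with rfl | h1
  · refine ContinuousAt.continuousWithinAt (tendsto_order.2 ⟨fun l hl => ?_, fun r hr => ?_⟩)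
    · rw [gammaProfile_one] at hl
      have hm : max l (1 / 2) < 1 := max_lt hl (by norm_num)
      obtain ⟨v₀, hv₀, hv₁⟩ := exists_between hm
      have hv₀' : v₀ ∈ Ioo (0 : ℝ) 1 := ⟨by linarith [le_max_right l (1 / 2)], hv₁⟩
      filter_upwards [lt_mem_nhds hv₁] with v hv
      have hQ := gammaQuantile_pos hk hv₀'
      calc l < v₀ := (le_max_left _ _).trans_lt hv₀
        _ = gammaDist k (gammaQuantile k v₀) := (gammaDist_gammaQuantile hk hv₀').symm
        _ ≤ gammaDist k (τ * gammaQuantile k v₀) :=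
            (strictMonoOn_gammaDist hk).monotoneOn hQ.le (show (0 : ℝ) ≤ _ by positivity)
              (le_mul_of_one_le_left hQ.le hτ)
        _ = gammaProfile k τ v₀ := (gammaProfile_of_mem hv₀').symm
        _ ≤ gammaProfile k τ v := monotone_gammaProfile hk hτ hv.le
    · rw [gammaProfile_one] at hr
      exact .of_forall fun v => (gammaProfile_mem hk hτ v).2.trans_lt hr
  · exact (hasDerivAt_gammaProfile hk hτ ⟨h0, h1⟩).continuousAt.continuousWithinAt

lemma concaveOn_gammaProfile (hk : 1 ≤ k) (hτ : 1 ≤ τ) :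
    ConcaveOn ℝ (Icc 0 1) (gammaProfile k τ) := by
  refine AntitoneOn.concaveOn_of_deriv (convex_Icc 0 1) (continuousOn_gammaProfile hk hτ) ?_ ?_
  · rw [interior_Icc]
    exact fun u hu =>
      (hasDerivAt_gammaProfile hk hτ hu).differentiableAt.differentiableWithinAt
  · rw [interior_Icc]
    intro u hu v hv huv
    rw [(hasDerivAt_gammaProfile hk hτ hu).deriv, (hasDerivAt_gammaProfile hk hτ hv).deriv]
    have h := (gammaQuantile_strictMonoOn hk).monotoneOn hu hv huv
    have hτ0 : 0 ≤ τ - 1 := by linarith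
    have hτ1 : 0 ≤ τ := by linarith
    gcongr

/-- The rescaled restriction of the profile to `[a, b]` lies below the profile: the ratio of their
derivatives is nondecreasing and they agree at both ends. -/
lemma chord_gammaProfile (hk : 1 ≤ k) (hτ : 1 ≤ τ) {a b c : ℝ} (ha : 0 ≤ a) (hab : a < b)
    (hb : b ≤ 1) (hc : c ∈ Icc (0 : ℝ) 1) :
    gammaProfile k τ (a + c * (b - a))
      ≤ gammaProfile k τ a + gammaProfile k τ c * (gammaProfile k τ b - gammaProfile k τ a) := by
  rcases hc.1.eq_or_lt with rfl | hc0
  · simp [gammaProfile_zero]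
  rcases hc.2.eq_or_lt with rfl | hc1
  · simp [gammaProfile_one]
  set ψ := gammaProfile k τ with hψ
  set D : ℝ → ℝ := fun u => τ ^ k * Real.exp (-((τ - 1) * gammaQuantile k u)) with hD
  have hd : 0 < b - a := by linarith
  have hin : ∀ s ∈ Ioo (0 : ℝ) 1, a + s * (b - a) ∈ Ioo (0 : ℝ) 1 := fun s hs =>
    ⟨by have := mul_pos hs.1 hd; linarith, by nlinarith [hs.2]⟩
  have hmaps : MapsTo (fun s : ℝ => a + s * (b - a)) (Icc 0 1) (Icc 0 1) := fun s hs =>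
    ⟨by have := mul_nonneg hs.1 hd.le; linarith, by nlinarith [hs.2]⟩
  have hψc : ContinuousOn ψ (Icc 0 1) := continuousOn_gammaProfile hk hτ
  have hφc : ContinuousOn (fun s => ψ (a + s * (b - a))) (Icc 0 1) :=
    hψc.comp (by fun_prop) hmaps
  have hψd : ∀ s ∈ Ioo (0 : ℝ) 1, HasDerivAt ψ (D s) s := fun s hs =>
    hasDerivAt_gammaProfile hk hτ hs
  have hφd : ∀ s ∈ Ioo (0 : ℝ) 1,
      HasDerivAt (fun s => ψ (a + s * (b - a))) (D (a + s * (b - a)) * (b - a)) s := fun s hs => by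
    have hlin : HasDerivAt (fun s : ℝ => a + s * (b - a)) (b - a) s := by
      simpa using ((hasDerivAt_id s).mul_const (b - a)).const_add a
    exact (hψd _ (hin s hs)).comp s hlin
  have hl : Icc 0 c ⊆ Icc (0 : ℝ) 1 := Icc_subset_Icc_right hc1.le
  have hr : Icc c 1 ⊆ Icc (0 : ℝ) 1 := Icc_subset_Icc_left hc0.le
  -- Compare the increments of the two functions on `[0, c]` and on `[c, 1]`.
  obtain ⟨ξ, hξ, e1⟩ := exists_ratio_hasDerivAt_eq_ratio_slope _ _ hc0 (hφc.mono hl)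
    (fun s hs => hφd s ⟨hs.1, hs.2.trans hc1⟩) ψ D (hψc.mono hl)
    (fun s hs => hψd s ⟨hs.1, hs.2.trans hc1⟩)
  obtain ⟨η, hη, e2⟩ := exists_ratio_hasDerivAt_eq_ratio_slope _ _ hc1 (hφc.mono hr)
    (fun s hs => hφd s ⟨hc0.trans hs.1, hs.2⟩) ψ D (hψc.mono hr)
    (fun s hs => hψd s ⟨hc0.trans hs.1, hs.2⟩)
  have hξ' : ξ ∈ Ioo (0 : ℝ) 1 := ⟨hξ.1, hξ.2.trans hc1⟩
  have hη' : η ∈ Ioo (0 : ℝ) 1 := ⟨hc0.trans hη.1, hη.2⟩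
  have hτ0 : 0 < τ := by linarith
  have hDpos : ∀ s, 0 < D s := fun s => by simp only [hD]; positivity
  have hratio : D (a + ξ * (b - a)) * D η ≤ D (a + η * (b - a)) * D ξ := by
    have hq := quantile_shift_le hk ha hab hb (gammaQuantile_pos hk hξ')
      ((gammaQuantile_strictMonoOn hk).monotoneOn hξ' hη' (hξ.2.trans hη.1).le)
      (gammaQuantile_pos hk (hin ξ hξ')) (gammaQuantile_pos hk (hin η hη'))
      (by rw [gammaDist_gammaQuantile hk (hin ξ hξ'), gammaDist_gammaQuantile hk hξ'])
      (by rw [gammaDist_gammaQuantile hk (hin η hη'), gammaDist_gammaQuantile hk hη'])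
    have hmul : ∀ x y : ℝ, τ ^ k * Real.exp x * (τ ^ k * Real.exp y)
        = τ ^ k * τ ^ k * Real.exp (x + y) := fun x y => by rw [Real.exp_add]; ring
    simp only [hD]
    rw [hmul, hmul]
    refine mul_le_mul_of_nonneg_left (Real.exp_le_exp.2 ?_) (by positivity)
    have := mul_le_mul_of_nonneg_left hq (show 0 ≤ τ - 1 by linarith)
    linarith
  have h0 : ψ 0 = 0 := gammaProfile_zero
  have h1 : ψ 1 = 1 := gammaProfile_one
  have hcm := gammaProfile_mem hk hτ c
  simp only [h0, h1, zero_mul, add_zero, sub_zero, one_mul, add_sub_cancel] at e1 e2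
  have hc1' : 0 ≤ ψ c * (1 - ψ c) := mul_nonneg hcm.1 (by linarith [hcm.2])
  have hfin : (ψ (a + c * (b - a)) - ψ a) * (1 - ψ c) * (D ξ * D η)
      ≤ (ψ b - ψ (a + c * (b - a))) * ψ c * (D ξ * D η) := by
    have := mul_le_mul_of_nonneg_left (mul_le_mul_of_nonneg_right hratio hd.le) hc1'
    linear_combination this - (1 - ψ c) * D η * e1 + ψ c * D ξ * e2
  have := le_of_mul_le_mul_right hfin (mul_pos (hDpos ξ) (hDpos η))
  linarith

lemma isProfile_gammaProfile (hk : 1 ≤ k) (hτ : 1 ≤ τ) : IsProfile (gammaProfile k τ) where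
  mono := monotone_gammaProfile hk hτ
  zero := gammaProfile_zero
  one := gammaProfile_one
  cont := continuousOn_gammaProfile hk hτ
  concave := concaveOn_gammaProfile hk hτ
  chord _ _ _ := chord_gammaProfile hk hτ

end GammaDist

/-! ### The measure on the line -/

/-- The density `α c_p r^(α-1) exp(-r^(αp))`, as a function of `r = |x|`. -/
def radialDens (p α r : ℝ) : ℝ :=
  α * (1 / Real.Gamma (1 + 1 / p)) * r ^ (α - 1) * Real.exp (-(r ^ (α * p)))

/-- The measure `μ_{p,α}` rescaled by `1 / 2`: with `c_p = 1 / Γ(1 + 1/p)` the density has total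
mass `2` on the line, so this is the probability measure. -/
def lineMeasure (p α : ℝ) : Measure ℝ :=
  (1 / 2 : ENNReal) • (volume : Measure ℝ).withDensity fun x => ENNReal.ofReal (radialDens p α |x|)

section LineMeasure

variable {p α : ℝ}

lemma one_le_shape (hp : p ∈ Ioc (0 : ℝ) 1) : 1 ≤ 1 / p := (one_le_div hp.1).2 hp.2

lemma radialDens_nonneg (hp : p ∈ Ioc (0 : ℝ) 1) (hα : 0 < α) {r : ℝ} (hr : 0 ≤ r) :
    0 ≤ radialDens p α r := by
  have h := one_le_shape hp
  have := Real.Gamma_pos_of_pos (show 0 < 1 + 1 / p by linarith)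
  unfold radialDens; positivity

lemma measurable_radialDens : Measurable (radialDens p α) := by
  unfold radialDens; fun_prop

/-- If `|x|` has density proportional to `radialDens p α`, then `|x|^(αp)` is Gamma distributed
with shape `1 / p`. -/
lemma hasDerivAt_gammaDist_rpow (hp : p ∈ Ioc (0 : ℝ) 1) {x : ℝ} (hx : 0 < x) :
    HasDerivAt (fun r => gammaDist (1 / p) (r ^ (α * p))) (radialDens p α x) x := by
  have hk := one_le_shape hp
  have h := (hasDerivAt_gammaDist hk (x ^ (α * p))).comp x
    (Real.hasDerivAt_rpow_const (p := α * p) (Or.inl hx.ne'))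
  have hval : gammaDens (1 / p) (x ^ (α * p)) * (α * p * x ^ (α * p - 1)) = radialDens p α x := by
    have hΓ := Real.Gamma_pos_of_pos (show 0 < 1 / p by linarith)
    have e1 : Real.Gamma (1 + 1 / p) = 1 / p * Real.Gamma (1 / p) := by
      rw [add_comm, Real.Gamma_add_one (by linarith)]
    have e2 : x ^ (α - 1) = (x ^ (α * p)) ^ (1 / p - 1) * x ^ (α * p - 1) := by
      rw [← Real.rpow_mul hx.le, ← Real.rpow_add hx]
      congr 1
      have := hp.1.ne'
      field_simp; ring
    have hp0 := hp.1.ne'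
    unfold gammaDens radialDens
    rw [e1, e2]
    field_simp
  rw [← hval]
  exact h

lemma continuous_gammaDist_rpow (hp : p ∈ Ioc (0 : ℝ) 1) (hα : 0 < α) :
    Continuous fun r => gammaDist (1 / p) (r ^ (α * p)) :=
  (continuous_gammaDist (one_le_shape hp)).comp
    (Real.continuous_rpow_const (mul_pos hα hp.1).le)

lemma integral_Ioi_radialDens (hp : p ∈ Ioc (0 : ℝ) 1) (hα : 0 < α) :
    ∫ x in Ioi (0 : ℝ), radialDens p α x = 1 := by
  have hβ : 0 < α * p := mul_pos hα hp.1
  have h := integral_Ioi_of_hasDerivAt_of_nonneg (a := 0)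
    (continuous_gammaDist_rpow hp hα).continuousWithinAt
    (fun x hx => hasDerivAt_gammaDist_rpow (α := α) hp hx)
    (fun x hx => radialDens_nonneg hp hα (le_of_lt hx))
    ((tendsto_gammaDist (one_le_shape hp)).comp (tendsto_rpow_atTop hβ))
  rw [h, Real.zero_rpow hβ.ne', gammaDist_zero, sub_zero]

lemma integral_Ioc_radialDens (hp : p ∈ Ioc (0 : ℝ) 1) (hα : 0 < α) {w : ℝ} (hw : 0 ≤ w) :
    ∫ x in Ioc 0 w, radialDens p α x = gammaDist (1 / p) (w ^ (α * p)) := by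
  have hβ : 0 < α * p := mul_pos hα hp.1
  have hc := continuous_gammaDist_rpow hp hα
  rw [← intervalIntegral.integral_of_le hw,
    intervalIntegral.integral_eq_sub_of_hasDerivAt_of_le hw hc.continuousOn
      (fun x hx => hasDerivAt_gammaDist_rpow hp hx.1)
      (intervalIntegral.intervalIntegrable_deriv_of_nonneg hc.continuousOn
        (fun x hx => hasDerivAt_gammaDist_rpow hp (by rw [min_eq_left hw] at hx; exact hx.1))
        (fun x hx => radialDens_nonneg hp hα (by rw [min_eq_left hw] at hx; exact hx.1.le))),
    Real.zero_rpow hβ.ne', gammaDist_zero, sub_zero]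

lemma integral_radialDens_abs (hp : p ∈ Ioc (0 : ℝ) 1) (hα : 0 < α) :
    ∫ x, radialDens p α |x| = 2 := by
  rw [integral_comp_abs, integral_Ioi_radialDens hp hα, mul_one]

lemma integrable_radialDens_abs (hp : p ∈ Ioc (0 : ℝ) 1) (hα : 0 < α) :
    Integrable fun x => radialDens p α |x| := by
  -- The Bochner integral of a non-integrable function is `0`, whereas this one is `2`.
  by_contra h
  have := integral_radialDens_abs hp hα
  rw [integral_undef h] at this
  norm_num at this

lemma lineMeasure_apply (hp : p ∈ Ioc (0 : ℝ) 1) (hα : 0 < α) {S : Set ℝ}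
    (hS : MeasurableSet S) :
    lineMeasure p α S = ENNReal.ofReal (1 / 2 * ∫ x in S, radialDens p α |x|) := by
  rw [lineMeasure, Measure.smul_apply, withDensity_apply _ hS,
    ← ofReal_integral_eq_lintegral_ofReal (integrable_radialDens_abs hp hα).integrableOn
      (.of_forall fun x => radialDens_nonneg hp hα (abs_nonneg x)),
    ENNReal.ofReal_mul (by norm_num), smul_eq_mul]
  congr 1
  rw [ENNReal.ofReal_div_of_pos two_pos]
  simp

lemma isProbabilityMeasure_lineMeasure (hp : p ∈ Ioc (0 : ℝ) 1) (hα : 0 < α) :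
    IsProbabilityMeasure (lineMeasure p α) := by
  refine ⟨?_⟩
  rw [lineMeasure_apply hp hα MeasurableSet.univ, Measure.restrict_univ,
    integral_radialDens_abs hp hα]
  norm_num

lemma lineMeasure_real_abs_le (hp : p ∈ Ioc (0 : ℝ) 1) (hα : 0 < α) {w : ℝ} (hw : 0 ≤ w) :
    (lineMeasure p α).real {x | |x| ≤ w} = gammaDist (1 / p) (w ^ (α * p)) := by
  have hS : MeasurableSet {x : ℝ | |x| ≤ w} := measurableSet_le measurable_abs measurable_const
  have hint : ∫ x in {x : ℝ | |x| ≤ w}, radialDens p α |x|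
      = 2 * gammaDist (1 / p) (w ^ (α * p)) := by
    have := integral_comp_abs (f := (Iic w).indicator (radialDens p α))
    rw [setIntegral_indicator measurableSet_Iic, Ioi_inter_Iic, integral_Ioc_radialDens hp hα hw]
      at this
    rw [← this, ← integral_indicator hS]
    rfl
  rw [measureReal_def, lineMeasure_apply hp hα hS, hint, ENNReal.toReal_ofReal]
  · ring
  · have h0 : 0 ≤ ∫ x in Ioc 0 w, radialDens p α x :=
      setIntegral_nonneg measurableSet_Ioc fun x hx => radialDens_nonneg hp hα hx.1.le
    rw [integral_Ioc_radialDens hp hα hw] at h0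
    linarith

lemma lineMeasure_real_abs_lt (hp : p ∈ Ioc (0 : ℝ) 1) (hα : 0 < α) {w : ℝ} (hw : 0 ≤ w) :
    (lineMeasure p α).real {x | |x| < w} = gammaDist (1 / p) (w ^ (α * p)) := by
  rw [← lineMeasure_real_abs_le hp hα hw]
  have hac : lineMeasure p α ≪ volume :=
    (withDensity_absolutelyContinuous _ _).smul_left _
  refine measureReal_congr (hac.ae_le ?_)
  have h1 : {x : ℝ | |x| < w} = Ioo (-w) w := by ext; simp [abs_lt]
  have h2 : {x : ℝ | |x| ≤ w} = Icc (-w) w := by ext; simp [abs_le]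
  rw [h1, h2]
  exact Ioo_ae_eq_Icc

/-- In dimension one the measure of a dilated ideal is determined by the measure of the ideal. -/
lemma map_lineMeasure_real (hp : p ∈ Ioc (0 : ℝ) 1) (hα : 0 < α) {t : ℝ} (ht : 1 ≤ t)
    (I : Set ℝ) (hI : MeasurableSet I) (hid : IsLineIdeal I) :
    ((lineMeasure p α).map fun x => t⁻¹ * x).real I
      = gammaProfile (1 / p) (t ^ (α * p)) ((lineMeasure p α).real I) := by
  have := isProbabilityMeasure_lineMeasure hp hα
  have ht0 : 0 < t := by linarith
  have hpre : ∀ {w : ℝ}, {x : ℝ | |t⁻¹ * x| ≤ w} = {x | |x| ≤ t * w} := by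
    intro w; ext x
    simp only [mem_ofPred_eq, abs_mul, abs_inv, abs_of_pos ht0, inv_mul_le_iff₀ ht0]
  have hpre' : ∀ {w : ℝ}, {x : ℝ | |t⁻¹ * x| < w} = {x | |x| < t * w} := by
    intro w; ext x
    simp only [mem_ofPred_eq, abs_mul, abs_inv, abs_of_pos ht0, inv_mul_lt_iff₀ ht0]
  rw [map_measureReal_apply (by fun_prop) hI]
  rcases I.eq_empty_or_nonempty with rfl | ⟨x₀, hx₀⟩
  · simp [gammaProfile_zero]
  by_cases hb : BddAbove (abs '' I)
  · set w := sSup (abs '' I) with hw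
    have hle : I ⊆ {x | |x| ≤ w} := fun x hx => le_csSup hb ⟨x, hx, rfl⟩
    have hlt : {x | |x| < w} ⊆ I := fun x hx => by
      obtain ⟨_, ⟨y, hy, rfl⟩, hxy⟩ := exists_lt_of_lt_csSup (Set.Nonempty.image abs ⟨x₀, hx₀⟩)
        (show |x| < sSup (abs '' I) from hx)
      exact hid y hy x hxy.le
    have hw0 : 0 ≤ w := (abs_nonneg x₀).trans (hle hx₀)
    have htw : 0 ≤ t * w := by positivity
    have e1 : (lineMeasure p α).real I = gammaDist (1 / p) (w ^ (α * p)) :=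
      le_antisymm (lineMeasure_real_abs_le hp hα hw0 ▸ measureReal_mono hle)
        (lineMeasure_real_abs_lt hp hα hw0 ▸ measureReal_mono hlt)
    have e2 : (lineMeasure p α).real ((fun x => t⁻¹ * x) ⁻¹' I)
        = gammaDist (1 / p) ((t * w) ^ (α * p)) := by
      refine le_antisymm (lineMeasure_real_abs_le hp hα htw ▸ measureReal_mono ?_)
        (lineMeasure_real_abs_lt hp hα htw ▸ measureReal_mono ?_)
      · rw [← hpre]; exact fun x hx => hle hx
      · rw [← hpre']; exact fun x hx => hlt hx
    rw [e1, e2, gammaProfile_gammaDist (one_le_shape hp) (by positivity),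
      Real.mul_rpow ht0.le hw0]
  · have : I = univ := eq_univ_of_forall fun x => by
      rw [not_bddAbove_iff] at hb
      obtain ⟨_, ⟨y, hy, rfl⟩, hxy⟩ := hb |x|
      exact hid y hy x hxy.le
    subst this
    simp [gammaProfile_one]

end LineMeasure

/-! ### Powers of the measure -/

/-- Passing from `μ_{p,α}` to the probability measure multiplies `n`-dimensional measures by the
constant `2 ^ n`. -/
lemma pi_withDensity_eq {p α : ℝ} (hp : p ∈ Ioc (0 : ℝ) 1) (hα : 0 < α) (n : ℕ) :
    (Measure.pi fun _ : Fin n => (volume : Measure ℝ).withDensity fun x =>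
        ENNReal.ofReal (radialDens p α |x|))
      = (2 ^ n : ENNReal) • Measure.pi fun _ : Fin n => lineMeasure p α := by
  have := isProbabilityMeasure_lineMeasure hp hα
  have h2 : ((volume : Measure ℝ).withDensity fun x => ENNReal.ofReal (radialDens p α |x|))
      = (2 : ENNReal) • lineMeasure p α := by
    rw [lineMeasure, smul_smul, one_div, ENNReal.mul_inv_cancel (by simp) (by simp), one_smul]
  rw [h2]
  have : IsFiniteMeasure ((2 : ENNReal) • lineMeasure p α) :=
    Measure.smul_finite _ (by simp)
  refine Measure.pi_eq fun s _ => ?_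
  simp [Measure.smul_apply, Measure.pi_pi, Finset.prod_mul_distrib]

/-- Dilating sets by `t` amounts to contracting the coordinates by `t`. -/
lemma pi_smul_set {ν : Measure ℝ} [IsProbabilityMeasure ν] {n : ℕ} {t : ℝ} (ht : t ≠ 0)
    {S : Set (Fin n → ℝ)} (hS : MeasurableSet S) :
    (Measure.pi fun _ : Fin n => ν) (t • S)
      = (Measure.pi fun _ : Fin n => ν.map fun x => t⁻¹ * x) S := by
  have : IsProbabilityMeasure (ν.map fun x => t⁻¹ * x) :=
    Measure.isProbabilityMeasure_map (by fun_prop)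
  rw [← Measure.pi_map_pi (fun _ => by fun_prop), Measure.map_apply (by fun_prop) hS,
    ← Set.preimage_smul_inv₀ ht]
  rfl

lemma pi_strip {ν : Measure ℝ} [IsProbabilityMeasure ν] {n : ℕ} [NeZero n] (w : ℝ) :
    (Measure.pi fun _ : Fin n => ν) {x | |x 0| ≤ w} = ν {x | |x| ≤ w} :=
  (measurePreserving_eval (fun _ : Fin n => ν) 0).measure_preimage
    (measurableSet_le measurable_abs measurable_const).nullMeasurableSet

/-- **S-inequality for `μ_{p,α}^n`.** For `p ∈ (0,1]` and `α > 0`, the product of the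
measure on `ℝ` with density `α·c_p·|x|^(α-1)·exp(-|x|^(αp))`, where `c_p = 1/Γ(1+1/p)`,
supports the S-inequality for all ideals in `ℝⁿ`. -/
theorem sInequality_mu_p_alpha (p α : ℝ) (hp : p ∈ Set.Ioc (0 : ℝ) 1) (hα : 0 < α)
    (n : ℕ) [NeZero n] :
    SupportsSIneq (Measure.pi fun _ : Fin n =>
      (volume : Measure ℝ).withDensity fun x =>
        ENNReal.ofReal (α * (1 / Real.Gamma (1 + 1 / p)) * |x| ^ (α - 1) *
          Real.exp (-(|x| ^ (α * p))))) := by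
  have := isProbabilityMeasure_lineMeasure hp hα
  have hpi := pi_withDensity_eq hp hα n
  simp only [radialDens] at hpi
  rw [hpi]
  intro K hK hid w hw hKP t ht
  have ht0 : t ≠ 0 := by linarith
  have hL : MeasurableSet {x : ℝ | |x| ≤ w} := measurableSet_le measurable_abs measurable_const
  have hP : MeasurableSet {x : Fin n → ℝ | |x 0| ≤ w} :=
    measurableSet_le (measurable_pi_apply 0).abs measurable_const
  set ν := lineMeasure p α
  set ν' := ν.map fun x => t⁻¹ * x with hν'
  have : IsProbabilityMeasure ν' := Measure.isProbabilityMeasure_map (by fun_prop)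
  have hline : ∀ I : Set ℝ, MeasurableSet I → IsLineIdeal I →
      ν'.real I = gammaProfile (1 / p) (t ^ (α * p)) (ν.real I) :=
    map_lineMeasure_real hp hα ht
  have hKP' : (Measure.pi fun _ : Fin n => ν) K = ν {x | |x| ≤ w} := by
    rw [Measure.smul_apply, Measure.smul_apply, pi_strip, smul_eq_mul, smul_eq_mul] at hKP
    exact (ENNReal.mul_right_inj (by simp) (by simp)).1 hKP
  rw [Measure.smul_apply, Measure.smul_apply, pi_smul_set ht0 hP, pi_smul_set ht0 hK, pi_strip]
  refine mul_le_mul_right ?_ _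
  refine (ENNReal.toReal_le_toReal (measure_ne_top _ _) (measure_ne_top _ _)).1 ?_
  change ν'.real _ ≤ (Measure.pi fun _ => ν').real K
  calc ν'.real {x | |x| ≤ w}
      = gammaProfile (1 / p) (t ^ (α * p)) (ν.real {x | |x| ≤ w}) :=
        hline _ hL fun x hx y hy => hy.trans hx
    _ = gammaProfile (1 / p) (t ^ (α * p)) ((Measure.pi fun _ : Fin n => ν).real K) := by
        rw [measureReal_def, measureReal_def, hKP']
    _ ≤ (Measure.pi fun _ => ν').real K :=
        profile_le_pi ν ν' (isProfile_gammaProfile (one_le_shape hp)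
          (Real.one_le_rpow ht (mul_pos hα hp.1).le)) hline n K hK hid
end
end

section
/- Let α > 0 and let ω_α be the symmetric Weibull measure on ℝ with density (1/2)·α·|x|^{α−1}·exp(−|x|^α). Then the product measure ω_α^n on ℝ^n supports the S-inequality for all ideals: for every ideal K ⊆ ℝ^n, every strip P = {x : |x_1| ≤ w} with ω_α^n(K) = ω_α^n(P), and every t ≥ 1, one has ω_α^n(tK) ≥ ω_α^n(tP). -/
/-!
For a strip `P` of half-width `w`, `ω_αⁿ(Pᶜ) = exp (-w ^ α)`, hence
`ω_αⁿ((tP)ᶜ) = ω_αⁿ(Pᶜ) ^ T` with `T = t ^ α`. Passing to complements, the S-inequality becomes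
`ω_αⁿ(tV) ≤ ω_αⁿ(V) ^ T` for every `V` whose complement is an ideal (`pi_weibull_dilate_le`).

This tensorizes by induction on `n`. Slicing along the first coordinate, the slice of `tV` at
`r` is the `t`-dilate of the slice of `V` at `r / t`, so the induction hypothesis bounds its
measure by `F (r / t) ^ T`, where `F s` is the measure of the slice of `V` at `s`, nondecreasing in
`|s|`. What remains is the one-dimensional inequality
`∫ F (r / t) ^ T dω_α(r) ≤ (∫ F dω_α) ^ T` (`lintegral_weibull_dilate_le`). The substitution
`r = t s` turns its left side into `T ∫ F(s) ^ T * q(s) ^ (T - 1) dω_α(s)` with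
`q(s) = exp (-|s| ^ α) = ω_α {r : |s| < |r|}`. Put `m = F ω_α`. By monotonicity
`F(s) q(s) ≤ m {r : |s| < |r|}`, so it is enough that
`T ∫ m {r : |s| < |r|} ^ (T - 1) dm(s) ≤ m(ℝ) ^ T`, which holds for every finite measure `m` on `ℝ`
(`lintegral_tail_rpow_le`).
-/

open MeasureTheory Real Set Pointwise

noncomputable section

/-! ### The symmetric Weibull measure and its tails -/

/-- Density of the symmetric Weibull measure. -/
def wDensity (α : ℝ) (x : ℝ) : ENNReal :=
  ENNReal.ofReal ((1 / 2) * α * |x| ^ (α - 1) * Real.exp (-(|x| ^ α)))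

/-- The symmetric Weibull measure `ω_α` on `ℝ`. -/
def weibull (α : ℝ) : Measure ℝ := (volume : Measure ℝ).withDensity (wDensity α)

lemma measurable_wDensity (α : ℝ) : Measurable (wDensity α) := by
  unfold wDensity
  fun_prop

lemma wDensity_neg (α x : ℝ) : wDensity α (-x) = wDensity α x := by simp [wDensity]

/-- The antiderivative of the density on `(a, ∞)` is `-exp (-x ^ α) / 2`. It may fail to be
differentiable at `a = 0`, where only its continuity is used. -/
lemma weibull_Ioi {α : ℝ} (hα : 0 < α) {a : ℝ} (ha : 0 ≤ a) :
    weibull α (Ioi a) = ENNReal.ofReal (1 / 2 * Real.exp (-(a ^ α))) := by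
  have hcont : ContinuousWithinAt (fun x : ℝ => -(1 / 2) * Real.exp (-(x ^ α))) (Ici a) a := by
    have h : Continuous fun x : ℝ => x ^ α := Real.continuous_rpow_const hα.le
    exact Continuous.continuousWithinAt (by fun_prop)
  have hderiv : ∀ x ∈ Ioi a, HasDerivAt (fun x : ℝ => -(1 / 2) * Real.exp (-(x ^ α)))
      ((1 / 2) * α * x ^ (α - 1) * Real.exp (-(x ^ α))) x := by
    intro x hx
    have hx0 : x ≠ 0 := (ha.trans_lt hx).ne'
    have := (((Real.hasDerivAt_rpow_const (p := α) (Or.inl hx0)).neg).exp).const_mul (-(1 / 2) : ℝ)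
    refine HasDerivAt.congr_deriv this ?_
    simp only [Pi.neg_apply]
    ring
  have hpos : ∀ x ∈ Ioi a, 0 ≤ (1 / 2) * α * x ^ (α - 1) * Real.exp (-(x ^ α)) := by
    intro x hx
    have : 0 < x := ha.trans_lt hx
    positivity
  have hlim : Filter.Tendsto (fun x : ℝ => -(1 / 2) * Real.exp (-(x ^ α))) Filter.atTop
      (nhds 0) := by
    have := (Real.tendsto_exp_neg_atTop_nhds_zero.comp (tendsto_rpow_atTop hα)).const_mul
      (-(1 / 2) : ℝ)
    simpa [Function.comp_def] using this
  have hint := integrableOn_Ioi_deriv_of_nonneg hcont hderiv hpos hlim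
  have hval := integral_Ioi_of_hasDerivAt_of_nonneg hcont hderiv hpos hlim
  rw [weibull, withDensity_apply _ measurableSet_Ioi]
  have hcongr : ∫⁻ x in Ioi a, wDensity α x =
      ∫⁻ x in Ioi a, ENNReal.ofReal ((1 / 2) * α * x ^ (α - 1) * Real.exp (-(x ^ α))) := by
    refine setLIntegral_congr_fun measurableSet_Ioi fun x hx => ?_
    simp only [wDensity, abs_of_pos (ha.trans_lt hx)]
  rw [hcongr, ← ofReal_integral_eq_lintegral_ofReal hint
    ((ae_restrict_iff' measurableSet_Ioi).2 (Filter.Eventually.of_forall hpos)), hval]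
  congr 1
  ring

lemma weibull_Iio (α a : ℝ) : weibull α (Iio (-a)) = weibull α (Ioi a) := by
  rw [weibull, withDensity_apply _ measurableSet_Ioi, withDensity_apply _ measurableSet_Iio,
    ← (Measure.measurePreserving_neg (volume : Measure ℝ)).setLIntegral_comp_preimage
      measurableSet_Iio (measurable_wDensity α)]
  simp [wDensity_neg]

lemma weibull_tail {α : ℝ} (hα : 0 < α) {a : ℝ} (ha : 0 ≤ a) :
    weibull α {r | a < |r|} = ENNReal.ofReal (Real.exp (-(a ^ α))) := by
  have hset : {r : ℝ | a < |r|} = Ioi a ∪ Iio (-a) := by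
    ext r
    simp only [mem_ofPred_eq, mem_union, mem_Ioi, mem_Iio, lt_abs]
    constructor <;> rintro (h | h)
    · exact Or.inl h
    · exact Or.inr (by linarith)
    · exact Or.inl h
    · exact Or.inr (by linarith)
  rw [hset, measure_union _ measurableSet_Iio, weibull_Iio, weibull_Ioi hα ha,
    ← ENNReal.ofReal_add (by positivity) (by positivity)]
  · congr 1
    ring
  · rw [Set.disjoint_left]
    intro x hx hx'
    simp only [mem_Ioi, mem_Iio] at hx hx'
    linarith

lemma isProbabilityMeasure_weibull {α : ℝ} (hα : 0 < α) : IsProbabilityMeasure (weibull α) := by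
  constructor
  have h0 : weibull α {0} = 0 :=
    withDensity_absolutelyContinuous _ _ (measure_singleton (0 : ℝ))
  have hset : {r : ℝ | 0 < |r|} = {0}ᶜ := by ext; simp
  have h := weibull_tail hα le_rfl
  rw [hset, Real.zero_rpow hα.ne', neg_zero, Real.exp_zero, ENNReal.ofReal_one] at h
  rw [← measure_add_measure_compl (measurableSet_singleton (0 : ℝ)), h0, h, zero_add]

/-- The density identity behind the change of variables `r = t s`: with `T = t ^ α`, the density
of the rescaled measure is `T` times the original density times the power `T - 1` of the tail
`ω_α {r : |s| < |r|} = exp (-|s| ^ α)`. -/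
lemma wDensity_dilate {α : ℝ} (hα : 0 < α) {t : ℝ} (ht : 1 ≤ t) (s : ℝ) :
    ENNReal.ofReal t * wDensity α (t * s) =
      ENNReal.ofReal (t ^ α) *
        (wDensity α s * weibull α {r | |s| < |r|} ^ (t ^ α - 1)) := by
  have ht0 : 0 < t := by linarith
  have hT : 0 ≤ t ^ α - 1 := sub_nonneg.2 (Real.one_le_rpow ht hα.le)
  rw [weibull_tail hα (abs_nonneg s), ENNReal.ofReal_rpow_of_nonneg (Real.exp_pos _).le hT,
    wDensity, wDensity, ← ENNReal.ofReal_mul ht0.le, ← ENNReal.ofReal_mul (by positivity),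
    ← ENNReal.ofReal_mul (by positivity)]
  congr 1
  rw [abs_mul, abs_of_pos ht0, Real.mul_rpow ht0.le (abs_nonneg _),
    Real.mul_rpow ht0.le (abs_nonneg _), ← Real.exp_mul, Real.rpow_sub_one ht0.ne']
  have : Real.exp (-(t ^ α * |s| ^ α)) =
      Real.exp (-(|s| ^ α)) * Real.exp (-|s| ^ α * (t ^ α - 1)) := by
    rw [← Real.exp_add]
    congr 1
    ring
  rw [this]
  field_simp

lemma lintegral_weibull_dilate {α : ℝ} (hα : 0 < α) {t : ℝ} (ht : 1 ≤ t) {G : ℝ → ENNReal}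
    (hG : Measurable G) :
    ∫⁻ r, G (t⁻¹ * r) ∂(weibull α) =
      ENNReal.ofReal (t ^ α) *
        ∫⁻ s, G s * weibull α {r | |s| < |r|} ^ (t ^ α - 1) ∂(weibull α) := by
  have ht0 : 0 < t := by linarith
  have hm := measurable_wDensity α
  have hA : Measurable fun s : ℝ => weibull α {r | |s| < |r|} := by
    have : Antitone fun a : ℝ => weibull α {r | a < |r|} :=
      fun a b hab => measure_mono fun r hr => lt_of_le_of_lt hab hr
    exact this.measurable.comp measurable_norm
  have hscale : ∀ h : ℝ → ENNReal, Measurable h →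
      ∫⁻ r, h r = ENNReal.ofReal t * ∫⁻ s, h (t * s) := fun h hh => by
    conv_lhs => rw [← Real.smul_map_volume_mul_left ht0.ne', lintegral_smul_measure,
      lintegral_map hh (measurable_const_mul t), abs_of_pos ht0, smul_eq_mul]
  have hR : Measurable fun s => G s * weibull α {r | |s| < |r|} ^ (t ^ α - 1) :=
    hG.mul (hA.pow_const _)
  have hGt : Measurable fun r => G (t⁻¹ * r) := by fun_prop
  generalize hq : (fun s : ℝ => weibull α {r | |s| < |r|}) = q at hA
  have hq' : ∀ s, weibull α {r | |s| < |r|} = q s := fun s => congrFun hq s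
  simp_rw [hq'] at hR ⊢
  rw [weibull, lintegral_withDensity_eq_lintegral_mul _ hm hGt,
    lintegral_withDensity_eq_lintegral_mul _ hm hR, hscale _ (hm.mul hGt),
    ← lintegral_const_mul _ (by fun_prop : Measurable fun s =>
      (wDensity α * fun r => G (t⁻¹ * r)) (t * s)),
    ← lintegral_const_mul _ (hm.mul hR)]
  refine lintegral_congr fun s => ?_
  simp only [Pi.mul_apply]
  rw [← mul_assoc, wDensity_dilate hα ht, hq', inv_mul_cancel_left₀ ht0.ne']
  ring

/-! ### Powers of the tail of a finite measure -/

/-- The tail function `s ↦ m {r : |s| < |r|}` exceeds the level `l` on a set of `m`-mass at most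
`m ℝ - l`. Each compact subset of that set lies in the ball `{r : |r| ≤ |s|}` of one of its own
points `s`, and this ball has mass `m ℝ - m {r : |s| < |r|} < m ℝ - l`. -/
lemma measure_lt_tail_le (m : Measure ℝ) [IsFiniteMeasure m] {l : ℝ}
    (hmeas : Measurable fun s : ℝ => m.real {r | |s| < |r|}) :
    m {s | l < m.real {r | |s| < |r|}} ≤ ENNReal.ofReal (m.real univ - l) := by
  -- Inner regularity makes a point of largest modulus available even if the level set has none.
  rw [(measurableSet_lt measurable_const hmeas).measure_eq_iSup_isCompact]
  refine iSup_le fun C => iSup_le fun hC => iSup_le fun hcomp => ?_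
  rcases C.eq_empty_or_nonempty with rfl | hne
  · simp
  obtain ⟨s, hs, hmax⟩ := hcomp.exists_isMaxOn hne (continuous_abs.continuousOn (s := C))
  have hms : MeasurableSet {r : ℝ | |s| < |r|} :=
    measurableSet_lt measurable_const measurable_norm
  have h1 : m C ≤ m {r : ℝ | |s| < |r|}ᶜ :=
    measure_mono fun r hr => notMem_ofPred_iff.2 (not_lt.2 (isMaxOn_iff.1 hmax r hr))
  refine h1.trans ?_
  rw [← ofReal_measureReal, measureReal_compl hms]
  exact ENNReal.ofReal_le_ofReal (sub_le_sub_left (hC hs).le _)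

/-- A Beta integral; `ENNReal.ofReal (M - l)` vanishes for `l ≥ M`. -/
lemma lintegral_beta {M p : ℝ} (hM : 0 ≤ M) (hp : 0 < p) :
    ∫⁻ l in Ioi (0 : ℝ), ENNReal.ofReal (M - l) * ENNReal.ofReal (l ^ (p - 1)) =
      ENNReal.ofReal (M ^ (p + 1) / (p * (p + 1))) := by
  have hsplit : ∫⁻ l in Ioi (0 : ℝ), ENNReal.ofReal (M - l) * ENNReal.ofReal (l ^ (p - 1)) =
      ∫⁻ l in Ioc 0 M, ENNReal.ofReal (M * l ^ (p - 1) - l ^ p) := by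
    rw [← Ioc_union_Ioi_eq_Ioi hM, lintegral_union measurableSet_Ioi
      (Set.disjoint_left.2 fun x hx hx' => not_lt.2 hx.2 hx')]
    have h0 : ∫⁻ l in Ioi M, ENNReal.ofReal (M - l) * ENNReal.ofReal (l ^ (p - 1)) = 0 := by
      rw [setLIntegral_congr_fun measurableSet_Ioi (g := fun _ => 0)]
      · simp
      · intro l hl
        simp [ENNReal.ofReal_of_nonpos (sub_nonpos.2 (le_of_lt hl))]
    rw [h0, add_zero]
    refine setLIntegral_congr_fun measurableSet_Ioc fun l hl => ?_
    rw [← ENNReal.ofReal_mul (sub_nonneg.2 hl.2), sub_mul, Real.rpow_sub_one hl.1.ne']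
    congr 2
    field_simp [hl.1.ne']
  have hi1 : IntervalIntegrable (fun l : ℝ => M * l ^ (p - 1)) volume 0 M :=
    (intervalIntegral.intervalIntegrable_rpow' (by linarith)).const_mul M
  have hi2 : IntervalIntegrable (fun l : ℝ => l ^ p) volume 0 M :=
    intervalIntegral.intervalIntegrable_rpow' (by linarith)
  have hint := (intervalIntegrable_iff_integrableOn_Ioc_of_le hM).1 (hi1.sub hi2)
  rw [hsplit, ← ofReal_integral_eq_lintegral_ofReal hint, ← intervalIntegral.integral_of_le hM,
    intervalIntegral.integral_sub hi1 hi2, intervalIntegral.integral_const_mul,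
    integral_rpow (Or.inl (by linarith)), integral_rpow (Or.inl (by linarith))]
  · congr 1
    rw [sub_add_cancel, Real.zero_rpow hp.ne', Real.zero_rpow (by linarith),
      Real.rpow_add_one' hM (by linarith)]
    field_simp
    ring
  · refine (ae_restrict_iff' measurableSet_Ioc).2 (Filter.Eventually.of_forall fun l hl => ?_)
    have h1 : l ^ p = l * l ^ (p - 1) := by
      rw [Real.rpow_sub_one hl.1.ne']
      field_simp [hl.1.ne']
    have h2 : 0 ≤ l ^ (p - 1) := Real.rpow_nonneg hl.1.le _
    simp only [Pi.zero_apply]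
    rw [h1]
    nlinarith [hl.2]

/-- For an atomless measure on a half-line this is the identity `T ∫ H ^ (T - 1) dm = H(0) ^ T`,
where `H` is the tail function, so that `dm = -dH`; atoms only decrease the left side. The proof is the layer
cake formula together with `measure_lt_tail_le`, which avoids differentiating `H`. -/
lemma lintegral_tail_rpow_le (m : Measure ℝ) [IsFiniteMeasure m] {T : ℝ} (hT : 1 ≤ T) :
    ENNReal.ofReal T * ∫⁻ s, m {r | |s| < |r|} ^ (T - 1) ∂m ≤ m univ ^ T := by
  rcases hT.eq_or_lt with rfl | hT
  · simp
  have hp : 0 < T - 1 := sub_pos.2 hT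
  have hmeas : Measurable fun s : ℝ => m.real {r | |s| < |r|} := by
    have : Antitone fun a : ℝ => m.real {r | a < |r|} :=
      fun a b hab => measureReal_mono fun r hr => lt_of_le_of_lt hab hr
    exact this.measurable.comp measurable_norm
  have hreal : ∀ s : ℝ, m {r | |s| < |r|} ^ (T - 1) =
      ENNReal.ofReal (m.real {r | |s| < |r|} ^ (T - 1)) := fun s => by
    rw [← ENNReal.ofReal_rpow_of_nonneg measureReal_nonneg hp.le, ofReal_measureReal]
  simp_rw [hreal]
  rw [lintegral_rpow_eq_lintegral_meas_lt_mul m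
    (Filter.Eventually.of_forall fun _ => measureReal_nonneg) hmeas.aemeasurable hp]
  have hle : ∫⁻ l in Ioi (0 : ℝ), m {s | l < m.real {r | |s| < |r|}} *
        ENNReal.ofReal (l ^ (T - 1 - 1)) ≤
      ENNReal.ofReal (m.real univ ^ (T - 1 + 1) / ((T - 1) * (T - 1 + 1))) := by
    rw [← lintegral_beta measureReal_nonneg hp]
    refine setLIntegral_mono' measurableSet_Ioi fun l _ => ?_
    gcongr
    exact measure_lt_tail_le m hmeas
  calc _ ≤ ENNReal.ofReal T * (ENNReal.ofReal (T - 1) *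
        ENNReal.ofReal (m.real univ ^ (T - 1 + 1) / ((T - 1) * (T - 1 + 1)))) := by gcongr
    _ = m univ ^ T := by
      rw [← ENNReal.ofReal_mul hp.le, ← ENNReal.ofReal_mul (by linarith), sub_add_cancel,
        ← ofReal_measureReal (μ := m) (s := univ),
        ENNReal.ofReal_rpow_of_nonneg measureReal_nonneg (by linarith)]
      congr 1
      field_simp

/-! ### Dilations of complements of ideals -/

/-- The one-dimensional inequality that drives the induction on the dimension. After the change
of variables, one of the `T = t ^ α` factors `F s` is absorbed in the measure `m = F ω_α`, and
the other `T - 1` are combined with the tail of `ω_α` by the monotonicity bound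
`F s * ω_α {r : |s| < |r|} ≤ m {r : |s| < |r|}`. -/
lemma lintegral_weibull_dilate_le {α : ℝ} (hα : 0 < α) {t : ℝ} (ht : 1 ≤ t) {F : ℝ → ENNReal}
    (hF : Measurable F) (hmono : ∀ r s : ℝ, |r| ≤ |s| → F r ≤ F s) (hF1 : ∀ s, F s ≤ 1) :
    ∫⁻ r, F (t⁻¹ * r) ^ (t ^ α) ∂(weibull α) ≤ (∫⁻ s, F s ∂(weibull α)) ^ (t ^ α) := by
  have := isProbabilityMeasure_weibull hα
  have hT : 1 ≤ t ^ α := Real.one_le_rpow ht hα.le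
  have hmass : (weibull α).withDensity F univ = ∫⁻ s, F s ∂(weibull α) := by
    simp [withDensity_apply]
  have hfin : IsFiniteMeasure ((weibull α).withDensity F) := by
    refine ⟨?_⟩
    rw [hmass]
    exact lt_of_le_of_lt (lintegral_mono hF1) (by simp)
  set T := t ^ α with hTdef
  have hms : ∀ s : ℝ, MeasurableSet {r : ℝ | |s| < |r|} := fun s =>
    measurableSet_lt measurable_const measurable_norm
  have hA : Measurable fun s : ℝ => (weibull α).withDensity F {r | |s| < |r|} := by
    have : Antitone fun a : ℝ => (weibull α).withDensity F {r | a < |r|} :=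
      fun a b hab => measure_mono fun r hr => lt_of_le_of_lt hab hr
    exact this.measurable.comp measurable_norm
  rw [lintegral_weibull_dilate hα ht (G := fun s => F s ^ T) (by fun_prop), ← hmass]
  refine le_trans ?_ (lintegral_tail_rpow_le _ hT)
  refine mul_le_mul_right ?_ _
  rw [lintegral_withDensity_eq_lintegral_mul _ hF (hA.pow_const _)]
  refine lintegral_mono fun s => ?_
  have hle : F s * weibull α {r | |s| < |r|} ≤ (weibull α).withDensity F {r | |s| < |r|} := by
    rw [withDensity_apply _ (hms s), ← setLIntegral_const]
    exact setLIntegral_mono hF fun r hr => hmono _ _ (le_of_lt hr)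
  have hpow : F s ^ T = F s * F s ^ (T - 1) := by
    conv_rhs => rw [← ENNReal.rpow_one (F s), ← ENNReal.rpow_mul, one_mul]
    rw [← ENNReal.rpow_add_of_nonneg _ _ zero_le_one (sub_nonneg.2 hT)]
    congr 1
    ring
  simp only [Pi.mul_apply]
  rw [hpow, mul_assoc, ← ENNReal.mul_rpow_of_nonneg _ _ (sub_nonneg.2 hT)]
  gcongr

/-- The S-inequality for complements of ideals, with `{x | t⁻¹ • x ∈ V}` in place of `t • V`:
dilating `V` by `t ≥ 1` brings its measure below the power `t ^ α`. Complements of strips give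
equality. -/
lemma pi_weibull_dilate_le {α : ℝ} (hα : 0 < α) {t : ℝ} (ht : 1 ≤ t) (n : ℕ) :
    ∀ V : Set (Fin n → ℝ), MeasurableSet V →
      (∀ x ∈ V, ∀ y : Fin n → ℝ, (∀ i, |x i| ≤ |y i|) → y ∈ V) →
      Measure.pi (fun _ : Fin n => weibull α) {x | t⁻¹ • x ∈ V} ≤
        Measure.pi (fun _ : Fin n => weibull α) V ^ (t ^ α) := by
  have := isProbabilityMeasure_weibull hα
  have ht0 : 0 < t := by linarith
  have hT : 0 < t ^ α := Real.rpow_pos_of_pos ht0 _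
  induction n with
  | zero =>
    intro V _ _
    rcases V.eq_empty_or_nonempty with rfl | ⟨x, hx⟩
    · simp
    · have : V = univ := eq_univ_of_forall fun y => Subsingleton.elim x y ▸ hx
      simp [this]
  | succ n ih =>
    intro V hV hup
    have hcons : Measurable fun p : ℝ × (Fin n → ℝ) => (Fin.cons p.1 p.2 : Fin (n + 1) → ℝ) := by
      refine measurable_pi_lambda _ fun i => ?_
      refine Fin.cases ?_ (fun j => ?_) i
      · simpa using measurable_fst
      · simpa [Function.comp_def] using (measurable_pi_apply j).comp (measurable_snd (α := ℝ))
    have hslice : ∀ A : Set (Fin (n + 1) → ℝ), MeasurableSet A →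
        Measure.pi (fun _ : Fin (n + 1) => weibull α) A =
          ∫⁻ s, Measure.pi (fun _ : Fin n => weibull α)
            {x | (Fin.cons s x : Fin (n + 1) → ℝ) ∈ A} ∂(weibull α) := by
      intro A hA
      have h := (measurePreserving_piFinSuccAbove (fun _ : Fin (n + 1) => weibull α) 0).symm
      rw [← h.measure_preimage hA.nullMeasurableSet, Measure.prod_apply (h.measurable hA)]
      refine lintegral_congr fun s => congrArg _ ?_
      ext x
      simp [MeasurableEquiv.piFinSuccAbove, Fin.insertNthEquiv]
    have hFm : Measurable fun s => Measure.pi (fun _ : Fin n => weibull α)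
        {x | (Fin.cons s x : Fin (n + 1) → ℝ) ∈ V} :=
      measurable_measure_prodMk_left (hcons hV)
    rw [hslice _ (by exact measurable_const_smul (t⁻¹) hV), hslice V hV]
    refine le_trans (lintegral_mono fun r => ?_) (lintegral_weibull_dilate_le hα ht hFm ?_ ?_)
    · have hsec : MeasurableSet {x | (Fin.cons (t⁻¹ * r) x : Fin (n + 1) → ℝ) ∈ V} :=
        (hcons.comp measurable_prodMk_left) hV
      refine le_trans (measure_mono fun x hx => ?_) (ih _ hsec ?_)
      · have : t⁻¹ • (Fin.cons r x : Fin (n + 1) → ℝ) = Fin.cons (t⁻¹ * r) (t⁻¹ • x) := by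
          ext i
          refine Fin.cases ?_ (fun j => ?_) i <;> simp
        simpa [this] using hx
      · intro x hx y hxy
        refine hup _ hx _ fun i => ?_
        refine Fin.cases ?_ (fun j => ?_) i
        · simp
        · simpa using hxy j
    · intro r s hrs
      refine measure_mono fun x hx => hup _ hx _ fun i => ?_
      refine Fin.cases ?_ (fun j => ?_) i
      · simpa using hrs
      · simp
    · exact fun s => prob_le_one

/-- **S-inequality for Weibull products.** For `α > 0`, the product of the symmetric Weibull
measure on `ℝ` with density `(1/2)·α·|x|^(α-1)·exp(-|x|^α)` supports the S-inequality
for all ideals in `ℝⁿ`. -/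
theorem sInequality_weibull (α : ℝ) (hα : 0 < α) (n : ℕ) [NeZero n] :
    SupportsSIneq (Measure.pi fun _ : Fin n =>
      (volume : Measure ℝ).withDensity fun x =>
        ENNReal.ofReal ((1 / 2) * α * |x| ^ (α - 1) * Real.exp (-(|x| ^ α)))) := by
  change SupportsSIneq (Measure.pi fun _ : Fin n => weibull α)
  have := isProbabilityMeasure_weibull hα
  intro K hK hideal w hw hKP t ht
  set μ := Measure.pi fun _ : Fin n => weibull α
  have ht0 : 0 < t := by linarith
  have hsmul : ∀ A : Set (Fin n → ℝ), t • A = {x | t⁻¹ • x ∈ A} := fun A => by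
    ext x
    exact mem_smul_set_iff_inv_smul_mem₀ ht0.ne' A x
  have hstrip : ∀ a : ℝ, 0 ≤ a → μ {x | |x 0| ≤ a}ᶜ = ENNReal.ofReal (Real.exp (-(a ^ α))) := by
    intro a ha
    rw [← weibull_tail hα ha,
      ← (measurePreserving_eval (fun _ : Fin n => weibull α) 0).measure_preimage
        (measurableSet_lt measurable_const measurable_norm :
          MeasurableSet {r : ℝ | a < |r|}).nullMeasurableSet]
    congr 1
    ext x
    simp
  have hmP : ∀ a : ℝ, MeasurableSet {x : Fin n → ℝ | |x 0| ≤ a} := fun a =>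
    measurableSet_le (measurable_pi_apply 0).norm measurable_const
  have htP : t • {x : Fin n → ℝ | |x 0| ≤ w} = {x | |x 0| ≤ t * w} := by
    rw [hsmul]
    ext x
    simp [abs_mul, abs_of_pos ht0, inv_mul_le_iff₀ ht0]
  have htK : MeasurableSet (t • K) := hK.const_smul_of_ne_zero ht0.ne'
  have hcompl : μ (t • K)ᶜ ≤ μ (t • {x : Fin n → ℝ | |x 0| ≤ w})ᶜ := by
    have h := pi_weibull_dilate_le hα ht n Kᶜ hK.compl
      fun x hx y hxy hy => hx (hideal y hy x hxy)
    have hKc : μ Kᶜ = ENNReal.ofReal (Real.exp (-(w ^ α))) := by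
      rw [← hstrip w hw, prob_compl_eq_one_sub hK, hKP, prob_compl_eq_one_sub (hmP w)]
    calc μ (t • K)ᶜ = μ {x | t⁻¹ • x ∈ Kᶜ} := by rw [hsmul]; rfl
      _ ≤ μ Kᶜ ^ (t ^ α) := h
      _ = μ (t • {x : Fin n → ℝ | |x 0| ≤ w})ᶜ := by
        rw [hKc, htP, hstrip _ (by positivity),
          ENNReal.ofReal_rpow_of_nonneg (Real.exp_pos _).le (by positivity), ← Real.exp_mul,
          Real.mul_rpow ht0.le hw]
        congr 2
        ring
  rw [prob_compl_eq_one_sub htK, htP, prob_compl_eq_one_sub (hmP _)] at hcompl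
  rw [htP]
  exact (ENNReal.sub_le_sub_iff_left prob_le_one ENNReal.one_ne_top).1 hcompl
end
end
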